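/- arXiv:1609.09526 — 5 statements merged into one kernel-verified Lean document; each statement's English description precedes it below -/
import Mathlib

section
/- Let c ≥ 1 be an integer and let (b, i) be a pair of integers with i = ((c−1)/2)·b − (c−1) and b ≥ 2c² + 2c + 2 (i.e., (b, i) lies on the lower facet of the closure of the cone σ_c°). Then there exists a lattice triangle T with b(T) = b and i(T) = i; such a T can be taken with vertices (0,0), ((2i+b−2)/c, 0), (B, c) for any integer B ≥ 0 with gcd(B, c) = gcd(B − (2i+b−2)/c, c) = 1. -/
open MeasureTheory

/-- The point of `ℝ²` corresponding to an integer point. -/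
def toR2 (z : ℤ × ℤ) : ℝ × ℝ := ((z.1 : ℝ), (z.2 : ℝ))

/-- A lattice polygon: a two-dimensional convex hull of finitely many integer points. -/
def IsLatticePolygon (P : Set (ℝ × ℝ)) : Prop :=
  ∃ S : Finset (ℤ × ℤ), P = convexHull ℝ (toR2 '' (S : Set (ℤ × ℤ))) ∧ affineSpan ℝ P = ⊤

/-- A lattice triangle: the convex hull of three affinely independent integer points. -/
def IsLatticeTriangle (T : Set (ℝ × ℝ)) : Prop :=
  ∃ v0 v1 v2 : ℤ × ℤ, AffineIndependent ℝ ![toR2 v0, toR2 v1, toR2 v2] ∧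
    T = convexHull ℝ {toR2 v0, toR2 v1, toR2 v2}

/-- The number of lattice points on the boundary. -/
noncomputable def bcount (P : Set (ℝ × ℝ)) : ℕ :=
  Set.ncard {z : ℤ × ℤ | toR2 z ∈ frontier P}

/-- The number of lattice points in the interior. -/
noncomputable def icount (P : Set (ℝ × ℝ)) : ℕ :=
  Set.ncard {z : ℤ × ℤ | toR2 z ∈ interior P}

/-- The Euclidean area. -/
noncomputable def area (P : Set (ℝ × ℝ)) : ℝ := (volume P).toReal


/-!
If `a = (2i + b - 2) / c`, the facet equation says `a = b - 2` and `2i = (c - 1)a`. Let `T` be the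
triangle with vertices `(0, 0)`, `(a, 0)`, `(B, c)`. As `c` is prime to `B` and `B - a`, the only
lattice points on the two slanted sides are their end points, so the boundary of `T` contains the
`a + 1` lattice points of the base and the apex. The point reflection `(x, y) ↦ (a + B - x, c - y)`
takes `T` to the other half of the parallelogram spanned by `(a, 0)` and `(B, c)`, and there are no
lattice points inside their common side. Each of the `c - 1` inner rows of the parallelogram
contains `a` lattice points, and half of them are interior to `T`.

A suitable `B` exists by choosing it modulo each prime `p ∣ c` to be different from `0` and `a`.
The only obstruction is at `p = 2`, when `a` is odd; but `(c - 1)a = 2i` makes `a` even if `c` is.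
-/

section Coprimality

theorem exists_prime_dvd_iff_not_dvd {R : Type*} [CommMonoidWithZero R]
    [UniqueFactorizationMonoid R] (a : R) {c : R} (hc : c ≠ 0) :
    ∃ m : R, ∀ p, Prime p → p ∣ c → (p ∣ m ↔ ¬ p ∣ a) := by
  classical
  let s := (UniqueFactorizationMonoid.factors c).filter (¬ · ∣ a)
  refine ⟨s.prod, fun p hp hpc => ⟨fun hpm => ?_, fun hpa => ?_⟩⟩
  · obtain ⟨q, hqs, hpq⟩ := hp.exists_mem_multiset_dvd hpm
    obtain ⟨hqc, hqa⟩ := Multiset.mem_filter.1 hqs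
    have hassoc : Associated p q :=
      hp.irreducible.associated_of_dvd
        (UniqueFactorizationMonoid.irreducible_of_factor q hqc) hpq
    rwa [hassoc.dvd_iff_dvd_left]
  · obtain ⟨q, hqc, hassoc⟩ :=
      UniqueFactorizationMonoid.exists_mem_factors_of_dvd hc hp.irreducible hpc
    have hqs : q ∈ s := Multiset.mem_filter.2 ⟨hqc, by rwa [← hassoc.dvd_iff_dvd_left]⟩
    exact hassoc.dvd.trans (Multiset.dvd_prod hqs)

theorem exists_isCoprime_and_isCoprime_sub {a c : ℤ} (hc : c ≠ 0) (hpar : 2 ∣ c → 2 ∣ a) :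
    ∃ B : ℤ, IsCoprime c B ∧ IsCoprime c (B - a) := by
  obtain ⟨m, hm⟩ := exists_prime_dvd_iff_not_dvd a hc
  refine ⟨m - a, isCoprime_of_prime_dvd (fun h => hc h.1) fun p hp hpc hdvd => ?_,
    isCoprime_of_prime_dvd (fun h => hc h.1) fun p hp hpc hdvd => ?_⟩
  · have hiff : p ∣ m ↔ p ∣ a := dvd_iff_dvd_of_dvd_sub hdvd
    have := hm p hp hpc
    tauto
  · have hiff : p ∣ m ↔ p ∣ 2 * a := dvd_iff_dvd_of_dvd_sub (by rwa [two_mul, ← sub_sub])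
    have hpa : ¬ p ∣ a := fun h => (hm p hp hpc).1 (hiff.2 (h.mul_left 2)) h
    have hp2 : p ∣ 2 := (hp.dvd_or_dvd (hiff.1 ((hm p hp hpc).2 hpa))).resolve_right hpa
    have hassoc : Associated p 2 := hp.associated_of_dvd Int.prime_two hp2
    exact hpa (hassoc.dvd.trans (hpar (hassoc.symm.dvd.trans hpc)))

end Coprimality

section BaseTriangle

/-- The triangle with vertices `(0, 0)`, `(a, 0)` and `(B, c)`, which has its base on the first
coordinate axis. It is the triangle that realizes the points of the lower facet. -/
def baseTriangle (a B c : ℤ) : Set (ℝ × ℝ) :=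
  convexHull ℝ {toR2 (0, 0), toR2 (a, 0), toR2 (B, c)}

variable {a B c : ℤ}

theorem affineIndependent_baseTriangle (ha : a ≠ 0) (hc : c ≠ 0) :
    AffineIndependent ℝ ![toR2 (0, 0), toR2 (a, 0), toR2 (B, c)] := by
  rw [affineIndependent_iff_of_fintype]
  intro w hw hcomb
  rw [Finset.weightedVSub_eq_linear_combination _ hw, Fin.sum_univ_three, Prod.ext_iff] at hcomb
  rw [Fin.sum_univ_three] at hw
  obtain ⟨hfst, hsnd⟩ : w 1 * a + w 2 * B = 0 ∧ w 2 * c = 0 := by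
    simpa [toR2] using hcomb
  have hw2 : w 2 = 0 := by simpa [hc] using hsnd
  have hw1 : w 1 = 0 := by simpa [hw2, ha] using hfst
  have hw0 : w 0 = 0 := by simpa [hw1, hw2] using hw
  exact Fin.forall_fin_succ.2 ⟨hw0, Fin.forall_fin_two.2 ⟨hw1, hw2⟩⟩

theorem isLatticeTriangle_baseTriangle (ha : a ≠ 0) (hc : c ≠ 0) :
    IsLatticeTriangle (baseTriangle a B c) :=
  ⟨(0, 0), (a, 0), (B, c), affineIndependent_baseTriangle ha hc, rfl⟩

/-- The vertices of `baseTriangle a B c` as an affine basis of the plane. Its barycentric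
coordinates describe both the triangle and its interior. -/
noncomputable def baseTriangleBasis (B : ℤ) (ha : a ≠ 0) (hc : c ≠ 0) :
    AffineBasis (Fin 3) ℝ (ℝ × ℝ) where
  toFun := ![toR2 (0, 0), toR2 (a, 0), toR2 (B, c)]
  ind' := affineIndependent_baseTriangle ha hc
  tot' := by
    rw [(affineIndependent_baseTriangle ha hc).affineSpan_eq_top_iff_card_eq_finrank_add_one]
    simp

theorem convexHull_range_baseTriangleBasis (ha : a ≠ 0) (hc : c ≠ 0) :
    convexHull ℝ (Set.range (baseTriangleBasis B ha hc)) = baseTriangle a B c := by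
  have hcoe : ⇑(baseTriangleBasis B ha hc) = ![toR2 (0, 0), toR2 (a, 0), toR2 (B, c)] := rfl
  rw [hcoe, Matrix.range_cons, Matrix.range_cons_cons_empty, Set.singleton_union, baseTriangle]

theorem baseTriangleBasis_coord_mul (ha : a ≠ 0) (hc : c ≠ 0) (p : ℝ × ℝ) :
    (baseTriangleBasis B ha hc).coord 2 p * c = p.2 ∧
    (baseTriangleBasis B ha hc).coord 1 p * (a * c) = c * p.1 - B * p.2 ∧
    (baseTriangleBasis B ha hc).coord 0 p * (a * c) = c * a + (B - a) * p.2 - c * p.1 := by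
  set β := baseTriangleBasis B ha hc
  have hcoe : ⇑β = ![toR2 (0, 0), toR2 (a, 0), toR2 (B, c)] := rfl
  have hsum : β.coord 0 p + β.coord 1 p + β.coord 2 p = 1 := by
    rw [← Fin.sum_univ_three fun j => β.coord j p, β.sum_coord_apply_eq_one]
  have hcomb := β.linear_combination_coord_eq_self p
  rw [Fin.sum_univ_three, Prod.ext_iff] at hcomb
  obtain ⟨hfst, hsnd⟩ : β.coord 1 p * a + β.coord 2 p * B = p.1 ∧ β.coord 2 p * c = p.2 := by
    simpa [hcoe, toR2] using hcomb
  refine ⟨hsnd, ?_, ?_⟩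
  · linear_combination (c : ℝ) * hfst - B * hsnd
  · linear_combination (a * c : ℝ) * hsum - c * hfst + (B - a) * hsnd

theorem toR2_mem_baseTriangle_iff (ha : 0 < a) (hc : 0 < c) {z : ℤ × ℤ} :
    toR2 z ∈ baseTriangle a B c ↔
      0 ≤ z.2 ∧ B * z.2 ≤ c * z.1 ∧ c * z.1 ≤ c * a + (B - a) * z.2 := by
  have hcR : (0 : ℝ) < c := by exact_mod_cast hc
  have hacR : (0 : ℝ) < a * c := by exact_mod_cast mul_pos ha hc
  obtain ⟨h2, h1, h0⟩ := baseTriangleBasis_coord_mul (B := B) ha.ne' hc.ne' (toR2 z)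
  rw [← convexHull_range_baseTriangleBasis ha.ne' hc.ne', AffineBasis.convexHull_eq_nonneg_coord,
    Set.mem_ofPred_eq, Fin.forall_fin_succ, Fin.forall_fin_two]
  simp only [Fin.succ_zero_eq_one, Fin.succ_one_eq_two]
  rw [← mul_nonneg_iff_of_pos_right hacR, h0, sub_nonneg, ← mul_nonneg_iff_of_pos_right hacR, h1,
    sub_nonneg, ← mul_nonneg_iff_of_pos_right hcR, h2]
  dsimp only [toR2]
  norm_cast
  tauto

theorem toR2_mem_interior_baseTriangle_iff (ha : 0 < a) (hc : 0 < c) {z : ℤ × ℤ} :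
    toR2 z ∈ interior (baseTriangle a B c) ↔
      0 < z.2 ∧ B * z.2 < c * z.1 ∧ c * z.1 < c * a + (B - a) * z.2 := by
  have hcR : (0 : ℝ) < c := by exact_mod_cast hc
  have hacR : (0 : ℝ) < a * c := by exact_mod_cast mul_pos ha hc
  obtain ⟨h2, h1, h0⟩ := baseTriangleBasis_coord_mul (B := B) ha.ne' hc.ne' (toR2 z)
  rw [← convexHull_range_baseTriangleBasis ha.ne' hc.ne', AffineBasis.interior_convexHull,
    Set.mem_ofPred_eq, Fin.forall_fin_succ, Fin.forall_fin_two]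
  simp only [Fin.succ_zero_eq_one, Fin.succ_one_eq_two]
  rw [← mul_pos_iff_of_pos_right hacR, h0, sub_pos, ← mul_pos_iff_of_pos_right hacR, h1,
    sub_pos, ← mul_pos_iff_of_pos_right hcR, h2]
  dsimp only [toR2]
  norm_cast
  tauto

theorem isClosed_baseTriangle : IsClosed (baseTriangle a B c) :=
  (Set.toFinite _).isCompact_convexHull ℝ |>.isClosed

end BaseTriangle

section LatticePoints

variable {a B c x y : ℤ}

theorem mul_ne_mul_of_isCoprime (hB : IsCoprime c B) (hy : 0 < y) (hyc : y < c) :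
    B * y ≠ c * x := fun h =>
  (Int.le_of_dvd hy (hB.dvd_of_dvd_mul_left ⟨x, h⟩)).not_gt hyc

theorem toR2_mem_frontier_baseTriangle_iff (ha : 0 < a) (hc : 0 < c) (hB : IsCoprime c B)
    (hBa : IsCoprime c (B - a)) {z : ℤ × ℤ} :
    toR2 z ∈ frontier (baseTriangle a B c) ↔ z = (B, c) ∨ (0 ≤ z.1 ∧ z.1 ≤ a) ∧ z.2 = 0 := by
  obtain ⟨x, y⟩ := z
  rw [isClosed_baseTriangle.frontier_eq, Set.mem_sdiff, toR2_mem_baseTriangle_iff ha hc,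
    toR2_mem_interior_baseTriangle_iff ha hc, Prod.mk.injEq]
  constructor
  · rintro ⟨⟨hy, hleft, hright⟩, hnot⟩
    have hyc : y ≤ c := by nlinarith
    obtain rfl | hy0 := hy.eq_or_lt
    · exact .inr ⟨⟨by nlinarith, by nlinarith⟩, rfl⟩
    obtain rfl | hylt := hyc.eq_or_lt
    · exact .inl ⟨by nlinarith, rfl⟩
    have hleft' := hleft.lt_of_ne (mul_ne_mul_of_isCoprime hB hy0 hylt)
    have hright' := hright.lt_of_ne fun h =>
      mul_ne_mul_of_isCoprime (x := x - a) hBa hy0 hylt (by linarith)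
    exact absurd ⟨hy0, hleft', hright'⟩ hnot
  · rintro (⟨rfl, rfl⟩ | ⟨⟨hx0, hxa⟩, rfl⟩)
    · exact ⟨⟨hc.le, by linarith, by linarith⟩, fun h => by linarith⟩
    · exact ⟨⟨le_rfl, by nlinarith, by nlinarith⟩, fun h => h.1.false⟩

theorem bcount_baseTriangle (ha : 0 < a) (hc : 0 < c) (hB : IsCoprime c B)
    (hBa : IsCoprime c (B - a)) : (bcount (baseTriangle a B c) : ℤ) = a + 2 := by
  have hset : {z : ℤ × ℤ | toR2 z ∈ frontier (baseTriangle a B c)} =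
      (insert (B, c) (Finset.Icc 0 a ×ˢ {0}) : Finset (ℤ × ℤ)) := by
    ext z
    rw [Set.mem_ofPred_eq, toR2_mem_frontier_baseTriangle_iff ha hc hB hBa, Finset.mem_coe,
      Finset.mem_insert, Finset.mem_product, Finset.mem_Icc, Finset.mem_singleton]
  have hapex : (B, c) ∉ Finset.Icc 0 a ×ˢ {0} := fun h =>
    hc.ne' (Finset.mem_singleton.1 (Finset.mem_product.1 h).2)
  rw [bcount, hset, Set.ncard_coe_finset, Finset.card_insert_of_notMem hapex,
    Finset.card_product, Int.card_Icc, Finset.card_singleton]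
  omega

/-- The inner rows of the parallelogram spanned by `(a, 0)` and `(B, c)`. Its left side is excluded
and its right side is included, so that every row has `a` points whatever `B` is. -/
noncomputable def innerParallelogram (a B c : ℤ) : Finset (ℤ × ℤ) :=
  (Finset.Ioc 0 a ×ˢ Finset.Ioo 0 c).image fun p => (B * p.2 / c + p.1, p.2)

theorem mem_innerParallelogram_iff :
    (x, y) ∈ innerParallelogram a B c ↔
      (0 < y ∧ y < c) ∧ B * y < c * x ∧ c * x ≤ c * a + B * y := by
  have hrow (hc : 0 < c) : 0 < x - B * y / c ∧ x - B * y / c ≤ a ↔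
      B * y < c * x ∧ c * x ≤ c * a + B * y := by
    rw [sub_pos, Int.ediv_lt_iff_lt_mul hc, sub_le_comm, Int.le_ediv_iff_mul_le hc, sub_mul,
      sub_le_iff_le_add', mul_comm x, mul_comm a]
  simp only [innerParallelogram, Finset.mem_image, Finset.mem_product, Finset.mem_Ioc,
    Finset.mem_Ioo, Prod.exists, Prod.mk.injEq]
  constructor
  · rintro ⟨k, y, ⟨hk, hy⟩, rfl, rfl⟩
    exact ⟨hy, (hrow (hy.1.trans hy.2)).1 (by simpa using hk)⟩
  · rintro ⟨hy, hx⟩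
    exact ⟨x - B * y / c, y, ⟨(hrow (hy.1.trans hy.2)).2 hx, hy⟩, by ring, rfl⟩

theorem card_innerParallelogram (ha : 0 ≤ a) (hc : 0 < c) :
    ((innerParallelogram a B c).card : ℤ) = (c - 1) * a := by
  have hinj : Function.Injective fun p : ℤ × ℤ => (B * p.2 / c + p.1, p.2) := by
    rintro ⟨k, y⟩ ⟨k', y'⟩ h
    simp only [Prod.mk.injEq] at h
    obtain ⟨hk, rfl⟩ := h
    rw [add_left_cancel hk]
  rw [innerParallelogram, Finset.card_image_of_injective _ hinj, Finset.card_product,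
    Int.card_Ioc, Int.card_Ioo, Nat.cast_mul, Int.toNat_of_nonneg (by omega),
    Int.toNat_of_nonneg (by omega)]
  ring

theorem setOf_toR2_mem_interior_subset_innerParallelogram (ha : 0 < a) (hc : 0 < c) :
    {z : ℤ × ℤ | toR2 z ∈ interior (baseTriangle a B c)} ⊆ innerParallelogram a B c := by
  rintro ⟨x, y⟩ hz
  obtain ⟨hy, hleft, hright⟩ := (toR2_mem_interior_baseTriangle_iff ha hc).1 hz
  exact mem_innerParallelogram_iff.2 ⟨⟨hy, by nlinarith⟩, hleft, by nlinarith⟩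

theorem image_sub_interior_eq_innerParallelogram_sdiff (ha : 0 < a) (hc : 0 < c)
    (hB : IsCoprime c B) (hBa : IsCoprime c (B - a)) :
    (fun z => (a + B, c) - z) '' {z : ℤ × ℤ | toR2 z ∈ interior (baseTriangle a B c)} =
      ↑(innerParallelogram a B c) \ {z : ℤ × ℤ | toR2 z ∈ interior (baseTriangle a B c)} := by
  ext ⟨x, y⟩
  rw [Set.image_eq_preimage_of_inverse (sub_sub_cancel (a + B, c)) (sub_sub_cancel (a + B, c))]
  simp only [Set.mem_preimage, Set.mem_sdiff, Set.mem_ofPred_eq, Finset.mem_coe, Prod.mk_sub_mk,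
    mem_innerParallelogram_iff, toR2_mem_interior_baseTriangle_iff ha hc]
  constructor
  · rintro ⟨hy, hleft, hright⟩
    have hy0 : 0 < y := by nlinarith
    refine ⟨⟨⟨hy0, by linarith⟩, by nlinarith, by nlinarith⟩, fun h => ?_⟩
    linarith [h.2.2]
  · rintro ⟨⟨⟨hy0, hyc⟩, hleft, hright⟩, hnot⟩
    have hright' := hright.lt_of_ne fun h =>
      mul_ne_mul_of_isCoprime (x := x - a) hB hy0 hyc (by linarith)
    have hdiag : c * a + (B - a) * y ≤ c * x := not_lt.1 fun h => hnot ⟨hy0, hleft, h⟩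
    have hdiag' := hdiag.lt_of_ne fun h =>
      mul_ne_mul_of_isCoprime (x := x - a) hBa hy0 hyc (by linarith)
    exact ⟨by linarith, by linarith, by linarith⟩

theorem two_mul_icount_baseTriangle (ha : 0 < a) (hc : 0 < c) (hB : IsCoprime c B)
    (hBa : IsCoprime c (B - a)) : 2 * (icount (baseTriangle a B c) : ℤ) = (c - 1) * a := by
  set I := {z : ℤ × ℤ | toR2 z ∈ interior (baseTriangle a B c)}
  have hhalf : (↑(innerParallelogram a B c) \ I).ncard = I.ncard := by
    rw [← image_sub_interior_eq_innerParallelogram_sdiff ha hc hB hBa,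
      Set.ncard_image_of_injective _ sub_right_injective]
  have hsplit := Set.ncard_sdiff_add_ncard_of_subset
    (setOf_toR2_mem_interior_subset_innerParallelogram (B := B) ha hc) (Finset.finite_toSet _)
  rw [hhalf, Set.ncard_coe_finset, ← two_mul] at hsplit
  rw [icount, ← card_innerParallelogram (B := B) ha.le hc, ← hsplit, Nat.cast_mul, Nat.cast_two]

end LatticePoints

theorem two_mul_eq_of_lower_facet {b c i : ℤ}
    (hlow : (i : ℝ) = ((c : ℝ) - 1) / 2 * (b : ℝ) - ((c : ℝ) - 1)) :
    2 * i = (c - 1) * (b - 2) := by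
  have : (2 * i : ℝ) = (c - 1) * (b - 2) := by rw [hlow]; ring
  exact_mod_cast this

theorem lower_facet_realized_general (c : ℤ) (hc : 1 ≤ c) (b i : ℤ)
    (hlow : (i : ℝ) = ((c : ℝ) - 1) / 2 * (b : ℝ) - ((c : ℝ) - 1)) (hb : 3 ≤ b) :
    (∃ T : Set (ℝ × ℝ), IsLatticeTriangle T ∧ (bcount T : ℤ) = b ∧ (icount T : ℤ) = i) ∧
    ∀ B : ℤ, Int.gcd B c = 1 → Int.gcd (B - (2 * i + b - 2) / c) c = 1 →
      IsLatticeTriangle (baseTriangle ((2 * i + b - 2) / c) B c) ∧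
        (bcount (baseTriangle ((2 * i + b - 2) / c) B c) : ℤ) = b ∧
        (icount (baseTriangle ((2 * i + b - 2) / c) B c) : ℤ) = i := by
  have hc0 : 0 < c := hc
  have ha0 : 0 < b - 2 := by omega
  have h2i : 2 * i = (c - 1) * (b - 2) := two_mul_eq_of_lower_facet hlow
  have hbase : (2 * i + b - 2) / c = b - 2 :=
    Int.ediv_eq_of_eq_mul_right hc0.ne' (by linear_combination h2i)
  have hT (B : ℤ) (hB : IsCoprime c B) (hBa : IsCoprime c (B - (b - 2))) :
      IsLatticeTriangle (baseTriangle (b - 2) B c) ∧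
        (bcount (baseTriangle (b - 2) B c) : ℤ) = b ∧
        (icount (baseTriangle (b - 2) B c) : ℤ) = i := by
    refine ⟨isLatticeTriangle_baseTriangle ha0.ne' hc0.ne', ?_, ?_⟩
    · rw [bcount_baseTriangle ha0 hc0 hB hBa, sub_add_cancel]
    · linarith [two_mul_icount_baseTriangle ha0 hc0 hB hBa]
  have hpar : 2 ∣ c → 2 ∣ b - 2 := by
    rintro ⟨k, rfl⟩
    exact ⟨k * (b - 2) - i, by linear_combination h2i⟩
  obtain ⟨B, hB, hBa⟩ := exists_isCoprime_and_isCoprime_sub hc0.ne' hpar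
  simp only [hbase, ← Int.isCoprime_iff_gcd_eq_one, isCoprime_comm (y := c)]
  exact ⟨⟨_, hT B hB hBa⟩, hT⟩

/-- Every integer pair `(b, i)` on the lower facet of the closure of the cone `σ_c°`
(i.e. `i = ((c−1)/2)·b − (c−1)` with `b ≥ 2c²+2c+2`) is realized by a lattice triangle;
one can take the triangle with vertices `(0,0)`, `((2i+b−2)/c, 0)`, `(B, c)` for any
integer `B ≥ 0` with `gcd(B, c) = gcd(B − (2i+b−2)/c, c) = 1`. -/
theorem lower_facet_realized (c : ℤ) (hc : 1 ≤ c) (b i : ℤ)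
    (hlow : (i : ℝ) = ((c : ℝ) - 1) / 2 * (b : ℝ) - ((c : ℝ) - 1))
    (hb : 2 * c ^ 2 + 2 * c + 2 ≤ b) :
    (∃ T : Set (ℝ × ℝ), IsLatticeTriangle T ∧ (bcount T : ℤ) = b ∧ (icount T : ℤ) = i) ∧
    ∀ B : ℤ, 0 ≤ B → Int.gcd B c = 1 → Int.gcd (B - (2 * i + b - 2) / c) c = 1 →
      IsLatticeTriangle
          (convexHull ℝ {toR2 (0, 0), toR2 ((2 * i + b - 2) / c, 0), toR2 (B, c)}) ∧
        (bcount (convexHull ℝ {toR2 (0, 0), toR2 ((2 * i + b - 2) / c, 0), toR2 (B, c)}) : ℤ)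
          = b ∧
        (icount (convexHull ℝ {toR2 (0, 0), toR2 ((2 * i + b - 2) / c, 0), toR2 (B, c)}) : ℤ)
          = i := by
  obtain ⟨hexists, hforall⟩ := lower_facet_realized_general c hc b i hlow (by nlinarith)
  exact ⟨hexists, fun B _ => hforall B⟩
end

section
/- For all integers c ≥ 1 and k ≥ 2c + 1, the lattice triangle T with vertices (0,0), ((k−2)(c+1), 0), (0, c+1) satisfies b(T) = k(c+1) and i(T) = k·c·(c+1)/2 − c(c+2). In particular, the pair (k(c+1), kc(c+1)/2 − c(c+2)) is realized by a lattice triangle for every k ≥ 2c+1. -/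
open MeasureTheory

/-!
Let `T` be the right triangle with vertices `(0, 0)`, `(a, 0)`, `(0, b)`, where `a, b > 0`. The
lattice points strictly between the ends of its hypotenuse are `(0, b) + t (a, -b) / gcd a b` with
`0 < t < gcd a b`. Together with the points on the two legs this gives `b(T) = a + b + gcd a b`.
The half-turn about `(a / 2, b / 2)` exchanges the lattice points of the open rectangle
`(0, a) × (0, b)` below the hypotenuse with those above it, so
`2 i(T) + (gcd a b - 1) = (a - 1) (b - 1)`. In the theorem `b = c + 1` divides `a = (k - 2) b`, so
`gcd a b = c + 1`.
-/

lemma mul_add_mul_eq_mul_iff_of_isCoprime {R : Type*} [CommRing R] {p q g x y : R}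
    (hpq : IsCoprime p q) :
    q * x + p * y = p * q * g ↔ ∃ t, x = p * t ∧ y = q * (g - t) := by
  constructor
  · intro h
    obtain ⟨u, v, huv⟩ := hpq
    exact ⟨u * x + v * (q * g - y), by linear_combination v * h - x * huv,
      by linear_combination u * h + (q * g - y) * huv⟩
  · rintro ⟨t, rfl, rfl⟩
    ring

section AxisAffineBasis

variable {𝕜 : Type*} [Field 𝕜] {a b : 𝕜}

lemma affineIndependent_zero_axis_axis (ha : a ≠ 0) (hb : b ≠ 0) :
    AffineIndependent 𝕜 ![((0, 0) : 𝕜 × 𝕜), (a, 0), (0, b)] := by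
  rw [affineIndependent_iff_of_fintype]
  intro w hw hcomb
  rw [Finset.weightedVSub_eq_linear_combination _ hw] at hcomb
  obtain ⟨h₁, h₂⟩ : w 1 = 0 ∧ w 2 = 0 := by
    simpa [Fin.sum_univ_three, ha, hb] using hcomb
  have h₀ : w 0 = 0 := by simpa [Fin.sum_univ_three, h₁, h₂] using hw
  simp [Fin.forall_fin_succ, h₀, h₁, h₂]

/-- The affine basis of the plane formed by the origin and a point on each axis. The triangle with
these vertices is where all its barycentric coordinates are nonnegative, and the interior is where
they are positive. -/
def axisAffineBasis (ha : a ≠ 0) (hb : b ≠ 0) : AffineBasis (Fin 3) 𝕜 (𝕜 × 𝕜) where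
  toFun := ![(0, 0), (a, 0), (0, b)]
  ind' := affineIndependent_zero_axis_axis ha hb
  tot' := by
    rw [(affineIndependent_zero_axis_axis ha hb).affineSpan_eq_top_iff_card_eq_finrank_add_one]
    simp

lemma coe_axisAffineBasis (ha : a ≠ 0) (hb : b ≠ 0) :
    ⇑(axisAffineBasis ha hb) = ![(0, 0), (a, 0), (0, b)] :=
  rfl

lemma range_axisAffineBasis (ha : a ≠ 0) (hb : b ≠ 0) :
    Set.range (axisAffineBasis ha hb) = {(0, 0), (a, 0), (0, b)} := by
  rw [coe_axisAffineBasis, Matrix.range_cons, Matrix.range_cons, Matrix.range_cons_empty]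
  rfl

lemma axisAffineBasis_coord (ha : a ≠ 0) (hb : b ≠ 0) (i : Fin 3) (p : 𝕜 × 𝕜) :
    (axisAffineBasis ha hb).coord i p = ![1 - p.1 / a - p.2 / b, p.1 / a, p.2 / b] i := by
  set β := axisAffineBasis ha hb
  have hcomb : β.coord 1 p * a = p.1 ∧ β.coord 2 p * b = p.2 := by
    have h := β.linear_combination_coord_eq_self p
    simpa [Fin.sum_univ_three, β, coe_axisAffineBasis, Prod.ext_iff,
      -AffineBasis.linear_combination_coord_eq_self] using h
  have h₁ : β.coord 1 p = p.1 / a := eq_div_of_mul_eq ha hcomb.1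
  have h₂ : β.coord 2 p = p.2 / b := eq_div_of_mul_eq hb hcomb.2
  have hsum := β.sum_coord_apply_eq_one p
  rw [Fin.sum_univ_three, h₁, h₂] at hsum
  have h₀ : β.coord 0 p = 1 - p.1 / a - p.2 / b := by linear_combination hsum
  fin_cases i <;> assumption

lemma one_sub_div_sub_div_eq_div (ha : a ≠ 0) (hb : b ≠ 0) (x y : 𝕜) :
    1 - x / a - y / b = (a * b - (b * x + a * y)) / (a * b) := by
  field_simp
  ring

end AxisAffineBasis

section OrderedField

variable {𝕜 : Type*} [Field 𝕜] [LinearOrder 𝕜] [IsStrictOrderedRing 𝕜] {a b : 𝕜}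

lemma convexHull_zero_axis_axis (ha : 0 < a) (hb : 0 < b) :
    convexHull 𝕜 {((0, 0) : 𝕜 × 𝕜), (a, 0), (0, b)} =
      {p | 0 ≤ p.1 ∧ 0 ≤ p.2 ∧ b * p.1 + a * p.2 ≤ a * b} := by
  rw [← range_axisAffineBasis ha.ne' hb.ne', AffineBasis.convexHull_eq_nonneg_coord]
  ext p
  have h : 0 ≤ 1 - p.1 / a - p.2 / b ↔ b * p.1 + a * p.2 ≤ a * b := by
    rw [one_sub_div_sub_div_eq_div ha.ne' hb.ne', le_div_iff₀ (mul_pos ha hb), zero_mul, sub_nonneg]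
  simpa [axisAffineBasis_coord, Fin.forall_fin_succ, h, le_div_iff₀, ha, hb, -sub_nonneg] using
    and_rotate

end OrderedField

lemma interior_convexHull_zero_axis_axis {a b : ℝ} (ha : 0 < a) (hb : 0 < b) :
    interior (convexHull ℝ {((0, 0) : ℝ × ℝ), (a, 0), (0, b)}) =
      {p | 0 < p.1 ∧ 0 < p.2 ∧ b * p.1 + a * p.2 < a * b} := by
  rw [← range_axisAffineBasis ha.ne' hb.ne', AffineBasis.interior_convexHull]
  ext p
  have h : 0 < 1 - p.1 / a - p.2 / b ↔ b * p.1 + a * p.2 < a * b := by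
    rw [one_sub_div_sub_div_eq_div ha.ne' hb.ne', lt_div_iff₀ (mul_pos ha hb), zero_mul, sub_pos]
  simpa [axisAffineBasis_coord, Fin.forall_fin_succ, h, ha, hb, -sub_pos] using and_rotate

/-- The right triangle with vertices `(0, 0)`, `(a, 0)`, `(0, b)`. -/
def rightTriangle (a b : ℤ) : Set (ℝ × ℝ) :=
  convexHull ℝ {toR2 (0, 0), toR2 (a, 0), toR2 (0, b)}

lemma isLatticeTriangle_rightTriangle {a b : ℤ} (ha : a ≠ 0) (hb : b ≠ 0) :
    IsLatticeTriangle (rightTriangle a b) := by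
  refine ⟨(0, 0), (a, 0), (0, b), ?_, rfl⟩
  simpa [toR2] using
    affineIndependent_zero_axis_axis (𝕜 := ℝ) (Int.cast_ne_zero.2 ha) (Int.cast_ne_zero.2 hb)

section LatticePoints

variable {a b : ℤ}

lemma toR2_mem_rightTriangle_iff (ha : 0 < a) (hb : 0 < b) {x y : ℤ} :
    toR2 (x, y) ∈ rightTriangle a b ↔ 0 ≤ x ∧ 0 ≤ y ∧ b * x + a * y ≤ a * b := by
  have h := convexHull_zero_axis_axis (𝕜 := ℝ) (Int.cast_pos.2 ha) (Int.cast_pos.2 hb)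
  simp only [rightTriangle, toR2, Int.cast_zero, h, Set.mem_ofPred_eq]
  norm_cast

lemma toR2_mem_interior_rightTriangle_iff (ha : 0 < a) (hb : 0 < b) {x y : ℤ} :
    toR2 (x, y) ∈ interior (rightTriangle a b) ↔ 0 < x ∧ 0 < y ∧ b * x + a * y < a * b := by
  have h := interior_convexHull_zero_axis_axis (Int.cast_pos.2 ha) (Int.cast_pos.2 hb)
  simp only [rightTriangle, toR2, Int.cast_zero, h, Set.mem_ofPred_eq]
  norm_cast

lemma isClosed_rightTriangle (a b : ℤ) : IsClosed (rightTriangle a b) :=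
  Set.Finite.isClosed_convexHull (𝕜 := ℝ) (Set.toFinite _)

lemma toR2_mem_frontier_rightTriangle_iff (ha : 0 < a) (hb : 0 < b) {x y : ℤ} :
    toR2 (x, y) ∈ frontier (rightTriangle a b) ↔
      0 ≤ x ∧ 0 ≤ y ∧ b * x + a * y ≤ a * b ∧ (x = 0 ∨ y = 0 ∨ b * x + a * y = a * b) := by
  rw [(isClosed_rightTriangle a b).frontier_eq, Set.mem_sdiff, toR2_mem_rightTriangle_iff ha hb,
    toR2_mem_interior_rightTriangle_iff ha hb]
  grind

/-- The lattice points in the open rectangle `(0, a) × (0, b)`. -/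
noncomputable def openRectangle (a b : ℤ) : Finset (ℤ × ℤ) :=
  Finset.Ioo 0 a ×ˢ Finset.Ioo 0 b

lemma mem_openRectangle {z : ℤ × ℤ} :
    z ∈ openRectangle a b ↔ (0 < z.1 ∧ z.1 < a) ∧ 0 < z.2 ∧ z.2 < b := by
  simp [openRectangle]

lemma card_openRectangle (ha : 0 < a) (hb : 0 < b) :
    ((openRectangle a b).card : ℤ) = (a - 1) * (b - 1) := by
  rw [openRectangle, Finset.card_product, Nat.cast_mul, Int.card_Ioo_of_lt _ _ ha,
    Int.card_Ioo_of_lt _ _ hb]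
  ring

/-- The lattice points strictly between the ends `(a, 0)` and `(0, b)` of the hypotenuse. -/
noncomputable def openHypotenuse (a b : ℤ) : Finset (ℤ × ℤ) :=
  {z ∈ openRectangle a b | b * z.1 + a * z.2 = a * b}

lemma openHypotenuse_mul_mul {p q g : ℤ} (hpq : IsCoprime p q) (hp : 0 < p) (hq : 0 < q)
    (hg : 0 < g) :
    openHypotenuse (p * g) (q * g) =
      (Finset.Ioo 0 g).image fun t ↦ (p * t, q * (g - t)) := by
  ext ⟨x, y⟩
  have hline : q * g * x + p * g * y = p * g * (q * g) ↔ ∃ t, x = p * t ∧ y = q * (g - t) := by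
    rw [← mul_add_mul_eq_mul_iff_of_isCoprime hpq, ← mul_right_inj' hg.ne' (b := _ + p * y)]
    constructor <;> exact fun h ↦ by linear_combination h
  simp only [openHypotenuse, Finset.mem_filter, mem_openRectangle, hline, Finset.mem_image,
    Finset.mem_Ioo, Prod.mk.injEq]
  constructor
  · rintro ⟨⟨⟨hx, hxa⟩, -⟩, t, rfl, rfl⟩
    exact ⟨t, ⟨pos_of_mul_pos_right hx hp.le, lt_of_mul_lt_mul_left hxa hp.le⟩, rfl, rfl⟩
  · rintro ⟨t, ⟨ht, htg⟩, rfl, rfl⟩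
    exact ⟨⟨⟨mul_pos hp ht, by gcongr⟩, mul_pos hq (sub_pos.2 htg), by gcongr; omega⟩, t, rfl, rfl⟩

lemma card_openHypotenuse (ha : 0 < a) (hb : 0 < b) :
    ((openHypotenuse a b).card : ℤ) = Int.gcd a b - 1 := by
  obtain ⟨p, q, hpq, hap, hbq⟩ := Int.exists_gcd_one (Int.gcd_pos_of_ne_zero_left b ha.ne')
  have hg : 0 < (Int.gcd a b : ℤ) := mod_cast Int.gcd_pos_of_ne_zero_left b ha.ne'
  generalize (Int.gcd a b : ℤ) = g at *
  subst hap hbq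
  have hp : 0 < p := pos_of_mul_pos_left ha hg.le
  have hq : 0 < q := pos_of_mul_pos_left hb hg.le
  have hinj : Function.Injective fun t ↦ (p * t, q * (g - t)) := fun s t h ↦
    mul_left_cancel₀ hp.ne' (Prod.ext_iff.1 h).1
  rw [openHypotenuse_mul_mul (Int.isCoprime_iff_gcd_eq_one.2 hpq) hp hq hg,
    Finset.card_image_of_injective _ hinj, Int.card_Ioo_of_lt _ _ hg, sub_zero]

/-- The lattice points on the boundary of `rightTriangle a b`, split into the disjoint pieces
vertical leg, horizontal leg without the origin, and hypotenuse without its ends. -/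
noncomputable def boundaryPoints (a b : ℤ) : Finset (ℤ × ℤ) :=
  ({0} ×ˢ Finset.Icc 0 b) ∪ (Finset.Ioc 0 a ×ˢ {0}) ∪ openHypotenuse a b

lemma toR2_mem_frontier_rightTriangle_iff_mem_boundaryPoints (ha : 0 < a) (hb : 0 < b)
    {z : ℤ × ℤ} : toR2 z ∈ frontier (rightTriangle a b) ↔ z ∈ boundaryPoints a b := by
  obtain ⟨x, y⟩ := z
  simp only [toR2_mem_frontier_rightTriangle_iff ha hb, boundaryPoints, openHypotenuse,
    Finset.mem_union, Finset.mem_filter, mem_openRectangle, Finset.mem_product,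
    Finset.mem_singleton, Finset.mem_Icc, Finset.mem_Ioc]
  constructor
  · rintro ⟨hx, hy, hle, hedge⟩
    have hxa : x ≤ a := by nlinarith
    have hyb : y ≤ b := by nlinarith
    rcases hx.eq_or_lt with rfl | hx
    · simp [hy, hyb]
    rcases hy.eq_or_lt with rfl | hy
    · simp [hx, hxa]
    · have hhyp : b * x + a * y = a * b := by omega
      exact .inr ⟨⟨⟨hx, by nlinarith⟩, hy, by nlinarith⟩, hhyp⟩
  · rintro ((⟨rfl, hy, hyb⟩ | ⟨⟨hx, hxa⟩, rfl⟩) | ⟨⟨⟨hx, -⟩, hy, -⟩, hhyp⟩)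
    · exact ⟨le_rfl, hy, by nlinarith, .inl rfl⟩
    · exact ⟨hx.le, le_rfl, by nlinarith, .inr (.inl rfl)⟩
    · exact ⟨hx.le, hy.le, hhyp.le, .inr (.inr hhyp)⟩

lemma card_boundaryPoints (ha : 0 < a) (hb : 0 < b) :
    ((boundaryPoints a b).card : ℤ) = a + b + Int.gcd a b := by
  have hlegs : Disjoint (({0} : Finset ℤ) ×ˢ Finset.Icc 0 b) (Finset.Ioc 0 a ×ˢ {0}) :=
    Finset.disjoint_product.2 (.inl (by simp))
  have hhyp : Disjoint ((({0} : Finset ℤ) ×ˢ Finset.Icc 0 b) ∪ (Finset.Ioc 0 a ×ˢ {0}))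
      (openHypotenuse a b) := by
    simp only [Finset.disjoint_left, openHypotenuse, Finset.mem_union, Finset.mem_product,
      Finset.mem_singleton, Finset.mem_filter, mem_openRectangle]
    grind
  rw [boundaryPoints, Finset.card_union_of_disjoint hhyp, Finset.card_union_of_disjoint hlegs,
    Finset.card_product, Finset.card_product, Finset.card_singleton, one_mul, mul_one]
  push_cast
  rw [Int.card_Icc_of_le _ _ (by omega), Int.card_Ioc_of_le _ _ ha.le, card_openHypotenuse ha hb]
  ring

lemma bcount_rightTriangle (ha : 0 < a) (hb : 0 < b) :
    (bcount (rightTriangle a b) : ℤ) = a + b + Int.gcd a b := by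
  have hset : {z | toR2 z ∈ frontier (rightTriangle a b)} = (boundaryPoints a b : Set (ℤ × ℤ)) :=
    Set.ext fun _ ↦ toR2_mem_frontier_rightTriangle_iff_mem_boundaryPoints ha hb
  rw [bcount, hset, Set.ncard_coe_finset, card_boundaryPoints ha hb]

lemma icount_rightTriangle (ha : 0 < a) (hb : 0 < b) :
    icount (rightTriangle a b) = {z ∈ openRectangle a b | b * z.1 + a * z.2 < a * b}.card := by
  rw [icount, ← Set.ncard_coe_finset]
  congr 1
  ext ⟨x, y⟩
  simp only [Set.mem_ofPred_eq, toR2_mem_interior_rightTriangle_iff ha hb, Finset.mem_coe,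
    Finset.mem_filter, mem_openRectangle]
  constructor
  · rintro ⟨hx, hy, hlt⟩
    exact ⟨⟨⟨hx, by nlinarith⟩, hy, by nlinarith⟩, hlt⟩
  · rintro ⟨⟨⟨hx, -⟩, hy, -⟩, hlt⟩
    exact ⟨hx, hy, hlt⟩

lemma card_below_hypotenuse_eq_card_above (a b : ℤ) :
    {z ∈ openRectangle a b | b * z.1 + a * z.2 < a * b}.card =
      {z ∈ openRectangle a b | a * b < b * z.1 + a * z.2}.card := by
  refine Finset.card_nbij' (fun z ↦ (a, b) - z) (fun z ↦ (a, b) - z) ?_ ?_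
    (fun z _ ↦ sub_sub_cancel _ z) (fun z _ ↦ sub_sub_cancel _ z)
  all_goals
    rintro ⟨x, y⟩
    simp only [Finset.coe_filter, Set.mem_ofPred_eq, mem_openRectangle, Prod.mk_sub_mk]
    rintro ⟨⟨⟨hx, hxa⟩, hy, hyb⟩, h⟩
    exact ⟨⟨⟨by omega, by omega⟩, by omega, by omega⟩, by linarith⟩

lemma card_below_add_card_openHypotenuse_add_card_above (a b : ℤ) :
    {z ∈ openRectangle a b | b * z.1 + a * z.2 < a * b}.card + (openHypotenuse a b).card +
      {z ∈ openRectangle a b | a * b < b * z.1 + a * z.2}.card = (openRectangle a b).card := by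
  rw [openHypotenuse, ← Finset.card_union_of_disjoint, ← Finset.card_union_of_disjoint,
    ← Finset.filter_or, ← Finset.filter_or, Finset.filter_true_of_mem]
  · intro z _
    omega
  all_goals
    simp only [Finset.disjoint_left, Finset.mem_union, Finset.mem_filter]
    omega

lemma two_mul_icount_rightTriangle (ha : 0 < a) (hb : 0 < b) :
    2 * (icount (rightTriangle a b) : ℤ) = (a - 1) * (b - 1) - (Int.gcd a b - 1) := by
  have hsplit := card_below_add_card_openHypotenuse_add_card_above a b
  rw [← card_below_hypotenuse_eq_card_above, ← icount_rightTriangle ha hb] at hsplit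
  zify at hsplit
  linarith [card_openRectangle ha hb, card_openHypotenuse ha hb]

end LatticePoints

theorem upper_face_realized_general (c k : ℤ) (hc : 0 ≤ c) (hk : 3 ≤ k) :
    IsLatticeTriangle (rightTriangle ((k - 2) * (c + 1)) (c + 1)) ∧
      (bcount (rightTriangle ((k - 2) * (c + 1)) (c + 1)) : ℤ) = k * (c + 1) ∧
      (icount (rightTriangle ((k - 2) * (c + 1)) (c + 1)) : ℤ) =
        k * c * (c + 1) / 2 - c * (c + 2) := by
  have hb : 0 < c + 1 := by omega
  have ha : 0 < (k - 2) * (c + 1) := mul_pos (by omega) hb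
  have hgcd : (Int.gcd ((k - 2) * (c + 1)) (c + 1) : ℤ) = c + 1 := by
    rw [Int.gcd_mul_left_left, Int.natAbs_of_nonneg hb.le]
  refine ⟨isLatticeTriangle_rightTriangle ha.ne' hb.ne', ?_, ?_⟩
  · rw [bcount_rightTriangle ha hb, hgcd]
    ring
  · have hcount := two_mul_icount_rightTriangle ha hb
    rw [hgcd] at hcount
    refine eq_sub_of_add_eq (Int.eq_ediv_of_mul_eq_right two_ne_zero ?_)
    linear_combination hcount

/-- For integers `c ≥ 1` and `k ≥ 2c+1`, the lattice triangle with vertices `(0,0)`,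
`((k−2)(c+1), 0)`, `(0, c+1)` satisfies `b(T) = k(c+1)` and `i(T) = kc(c+1)/2 − c(c+2)`;
in particular the pair `(k(c+1), kc(c+1)/2 − c(c+2))` is realized by a lattice triangle. -/
theorem upper_face_realized (c k : ℤ) (hc : 1 ≤ c) (hk : 2 * c + 1 ≤ k) :
    (IsLatticeTriangle
        (convexHull ℝ {toR2 (0, 0), toR2 ((k - 2) * (c + 1), 0), toR2 (0, c + 1)}) ∧
      (bcount (convexHull ℝ {toR2 (0, 0), toR2 ((k - 2) * (c + 1), 0), toR2 (0, c + 1)}) : ℤ)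
        = k * (c + 1) ∧
      (icount (convexHull ℝ {toR2 (0, 0), toR2 ((k - 2) * (c + 1), 0), toR2 (0, c + 1)}) : ℤ)
        = k * c * (c + 1) / 2 - c * (c + 2)) ∧
    ∃ T : Set (ℝ × ℝ), IsLatticeTriangle T ∧
      (bcount T : ℤ) = k * (c + 1) ∧ (icount T : ℤ) = k * c * (c + 1) / 2 - c * (c + 2) :=
  have h := upper_face_realized_general c k (by omega) (by omega)
  ⟨h, _, h⟩
end

section
/- Let p be an odd prime. If T is a lattice triangle whose normalized volume equals p (i.e., its area a(T) satisfies 2·a(T) = p), then (b(T), i(T)) = (3, (p−1)/2) or (b(T), i(T)) = (p+2, 0); conversely, both pairs are realized by lattice triangles of normalized volume p. Equivalently, the set of pairs (b(T), i(T)) over lattice triangles T intersected with the line {(b, i) : i = −b/2 + p/2 + 1} equals {(3, (p−1)/2), (p+2, 0)}. -/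
open MeasureTheory

/-!
A lattice triangle and its reflection in the midpoint of a side make up a parallelogram, and a
half-open lattice parallelogram contains as many lattice points as the index of the sublattice
spanned by its sides, that is, twice the area of the triangle. Counting gives Pick's formula
`b + 2 i = 2 a + 2`. On the other hand `b` is the sum of the lattice lengths of the three sides,
and each of these divides `2 a`. If `2 a = p` is prime, each length is `1` or `p`, and Pick's
formula leaves room for at most one `p`.
-/

section TriDet

variable {R : Type*} [CommRing R]

/-- Twice the signed area of the triangle `a b c`. Normalised by `triDet a b c`, the values
`triDet z b c`, `triDet a z c` and `triDet a b z` are the barycentric coordinates of `z`. -/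
def triDet (a b c : R × R) : R :=
  (b.1 - a.1) * (c.2 - a.2) - (b.2 - a.2) * (c.1 - a.1)

lemma triDet_rotate (a b c : R × R) : triDet b c a = triDet a b c := by
  simp only [triDet]; ring

lemma triDet_swap (a b c : R × R) : triDet a c b = -triDet a b c := by
  simp only [triDet]; ring

lemma triDet_self (a b : R × R) : triDet a b b = 0 := by
  simp only [triDet]; ring

lemma triDet_add_triDet_add_triDet (a b c z : R × R) :
    triDet z b c + triDet a z c + triDet a b z = triDet a b c := by
  simp only [triDet]; ring

lemma triDet_smul_add_smul_add_smul (a b c z : R × R) :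
    triDet z b c • a + triDet a z c • b + triDet a b z • c = triDet a b c • z := by
  ext <;> simp only [triDet, Prod.fst_add, Prod.snd_add, Prod.smul_fst, Prod.smul_snd,
    smul_eq_mul] <;> ring

/-- The linear map sending the coordinate vectors to the sides `b - a` and `c - a`. -/
def sideMap (a b c : R × R) : R × R →ₗ[R] R × R :=
  (LinearMap.toSpanSingleton R _ (b - a)).coprod (LinearMap.toSpanSingleton R _ (c - a))

lemma sideMap_apply (a b c q : R × R) :
    sideMap a b c q = q.1 • (b - a) + q.2 • (c - a) := rfl

lemma det_sideMap (a b c : R × R) : LinearMap.det (sideMap a b c) = triDet a b c := by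
  rw [← LinearMap.det_toMatrix (Module.Basis.finTwoProd R), Matrix.det_fin_two]
  simp [LinearMap.toMatrix_apply, sideMap_apply, triDet]
  ring

lemma triDet_add_sideMap_middle (a b c z q : R × R) :
    triDet a (z + sideMap a b c q) c = triDet a z c + q.1 * triDet a b c := by
  simp only [sideMap_apply, triDet, Prod.fst_add, Prod.snd_add, Prod.smul_fst, Prod.smul_snd,
    Prod.fst_sub, Prod.snd_sub, smul_eq_mul]
  ring

lemma triDet_add_sideMap_right (a b c z q : R × R) :
    triDet a b (z + sideMap a b c q) = triDet a b z + q.2 * triDet a b c := by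
  simp only [sideMap_apply, triDet, Prod.fst_add, Prod.snd_add, Prod.smul_fst, Prod.smul_snd,
    Prod.fst_sub, Prod.snd_sub, smul_eq_mul]
  ring

lemma eq_of_triDet_eq [IsDomain R] {a b c z z' : R × R} (h : triDet a b c ≠ 0)
    (h₁ : triDet a z c = triDet a z' c) (h₂ : triDet a b z = triDet a b z') : z = z' := by
  have h₀ : triDet z b c = triDet z' b c := by
    linear_combination triDet_add_triDet_add_triDet a b c z
      - triDet_add_triDet_add_triDet a b c z' - h₁ - h₂
  apply smul_right_injective (R × R) h
  calc triDet a b c • z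
      = triDet z b c • a + triDet a z c • b + triDet a b z • c :=
        (triDet_smul_add_smul_add_smul a b c z).symm
    _ = triDet z' b c • a + triDet a z' c • b + triDet a b z' • c := by rw [h₀, h₁, h₂]
    _ = triDet a b c • z' := triDet_smul_add_smul_add_smul a b c z'

lemma triDet_add_smul_middle (a c u : R × R) (k : R) :
    triDet a (a + k • u) c = k * triDet a (a + u) c := by
  simp only [triDet, Prod.fst_add, Prod.snd_add, Prod.smul_fst, Prod.smul_snd, smul_eq_mul]
  ring

lemma exists_eq_add_smul_of_triDet_eq_zero {a u z : R × R} (hu : IsCoprime u.1 u.2)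
    (h : triDet a (a + u) z = 0) : ∃ k : R, z = a + k • u := by
  obtain ⟨r, s, hrs⟩ := hu
  simp only [triDet, Prod.fst_add, Prod.snd_add, add_sub_cancel_left] at h
  refine ⟨r * (z.1 - a.1) + s * (z.2 - a.2), ?_⟩
  ext <;> simp only [Prod.fst_add, Prod.snd_add, Prod.smul_fst, Prod.smul_snd, smul_eq_mul]
  · linear_combination -(z.1 - a.1) * hrs - s * h
  · linear_combination -(z.2 - a.2) * hrs + r * h

lemma affineIndependent_iff_triDet_ne_zero [IsDomain R] {a b c : R × R} :
    AffineIndependent R ![a, b, c] ↔ triDet a b c ≠ 0 := by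
  have hsides : (fun i => ![a, b, c] (finSuccAboveEquiv (0 : Fin 3) i) -ᵥ a) =
      ![b - a, c - a] := by
    ext i <;> fin_cases i <;> rfl
  calc AffineIndependent R ![a, b, c]
      ↔ LinearIndependent R ![b - a, c - a] := by
        rw [affineIndependent_iff_linearIndependent_vsub R _ 0,
          ← linearIndependent_equiv (finSuccAboveEquiv (0 : Fin 3)), ← hsides]
        rfl
    _ ↔ LinearMap.ker (sideMap a b c) = ⊥ := by
        simp [LinearIndependent.pair_iff, LinearMap.ker_eq_bot', sideMap_apply, Prod.ext_iff]
    _ ↔ triDet a b c ≠ 0 := by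
        rw [← det_sideMap, ne_eq, LinearMap.det_eq_zero_iff_ker_ne_bot, not_not]

end TriDet

section RealTriangle

variable {a b c : ℝ × ℝ}

lemma affineSpan_eq_top_of_triDet_ne_zero (h : triDet a b c ≠ 0) :
    affineSpan ℝ (Set.range ![a, b, c]) = ⊤ := by
  rw [(affineIndependent_iff_triDet_ne_zero.mpr h).affineSpan_eq_top_iff_card_eq_finrank_add_one]
  simp

/-- The vertices of a nondegenerate triangle, as an affine basis of the plane. -/
noncomputable def triangleBasis (h : triDet a b c ≠ 0) : AffineBasis (Fin 3) ℝ (ℝ × ℝ) :=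
  ⟨![a, b, c], affineIndependent_iff_triDet_ne_zero.mpr h, affineSpan_eq_top_of_triDet_ne_zero h⟩

lemma coe_triangleBasis (h : triDet a b c ≠ 0) : ⇑(triangleBasis h) = ![a, b, c] := rfl

lemma range_triangleBasis (h : triDet a b c ≠ 0) : Set.range (triangleBasis h) = {a, b, c} := by
  rw [coe_triangleBasis, Matrix.range_cons, Matrix.range_cons_cons_empty, Set.singleton_union]

lemma triangleBasis_coord (h : triDet a b c ≠ 0) (z : ℝ × ℝ) (i : Fin 3) :
    (triangleBasis h).coord i z =
      ![triDet z b c, triDet a z c, triDet a b z] i / triDet a b c := by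
  set w : Fin 3 → ℝ := fun i => ![triDet z b c, triDet a z c, triDet a b z] i / triDet a b c
  have hw : ∑ i, w i = 1 := by
    simp only [w, ← Finset.sum_div, Fin.sum_univ_three, div_eq_one_iff_eq h]
    exact triDet_add_triDet_add_triDet a b c z
  have hz : Finset.univ.affineCombination ℝ (triangleBasis h) w = z := by
    rw [Finset.affineCombination_eq_linear_combination _ _ _ hw, ← smul_right_inj h,
      Finset.smul_sum, ← triDet_smul_add_smul_add_smul a b c z, Fin.sum_univ_three]
    simp [w, smul_smul, mul_div_cancel₀ _ h, coe_triangleBasis]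
  nth_rw 1 [← hz]
  exact (triangleBasis h).coord_apply_combination_of_mem (Finset.mem_univ i) hw

lemma mem_convexHull_iff_triDet_nonneg (h : 0 < triDet a b c) {z : ℝ × ℝ} :
    z ∈ convexHull ℝ {a, b, c} ↔ 0 ≤ triDet z b c ∧ 0 ≤ triDet a z c ∧ 0 ≤ triDet a b z := by
  rw [← range_triangleBasis h.ne', AffineBasis.convexHull_eq_nonneg_coord]
  simp [triangleBasis_coord, Fin.forall_fin_succ, le_div_iff₀ h]

lemma mem_interior_convexHull_iff_triDet_pos (h : 0 < triDet a b c) {z : ℝ × ℝ} :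
    z ∈ interior (convexHull ℝ {a, b, c}) ↔
      0 < triDet z b c ∧ 0 < triDet a z c ∧ 0 < triDet a b z := by
  rw [← range_triangleBasis h.ne', AffineBasis.interior_convexHull]
  simp [triangleBasis_coord, Fin.forall_fin_succ, lt_div_iff₀ h]

lemma volume_convexHull_unit_triangle :
    volume (convexHull ℝ {((0, 0) : ℝ × ℝ), (1, 0), (0, 1)}) = ENNReal.ofReal (1 / 2) := by
  have hregion : interior (convexHull ℝ {((0, 0) : ℝ × ℝ), (1, 0), (0, 1)}) =
      regionBetween (fun _ => 0) (fun x => 1 - x) (Set.Ioo 0 1) := by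
    ext ⟨x, y⟩
    rw [mem_interior_convexHull_iff_triDet_pos (by simp [triDet])]
    simp only [triDet, regionBetween, Set.mem_ofPred_eq, Set.mem_Ioo]
    grind
  rw [← measure_interior_of_null_frontier ((convex_convexHull ℝ _).addHaar_frontier volume),
    hregion, Measure.volume_eq_prod, volume_regionBetween_eq_integral (by simp)
      ((by fun_prop : Continuous fun x : ℝ => 1 - x).integrableOn_Icc.mono_set
        Set.Ioo_subset_Icc_self) measurableSet_Ioo (by grind)]
  congr 1
  rw [← integral_Ioc_eq_integral_Ioo, ← intervalIntegral.integral_of_le zero_le_one]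
  simp only [Pi.sub_apply, sub_zero]
  rw [intervalIntegral.integral_sub (by simp) (by simp), integral_id]
  norm_num

open scoped Pointwise in
lemma convexHull_eq_vadd_image_sideMap (a b c : ℝ × ℝ) :
    convexHull ℝ {a, b, c} = a +ᵥ sideMap a b c '' convexHull ℝ {(0, 0), (1, 0), (0, 1)} := by
  rw [LinearMap.image_convexHull, ← convexHull_vadd]
  congr 1
  simp [Set.image_insert_eq, Set.vadd_set_insert, sideMap_apply]

open scoped Pointwise in
lemma volume_convexHull_triangle (a b c : ℝ × ℝ) :
    volume (convexHull ℝ {a, b, c}) = ENNReal.ofReal (|triDet a b c| / 2) := by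
  rw [convexHull_eq_vadd_image_sideMap, measure_vadd, Measure.addHaar_image_linearMap,
    det_sideMap, volume_convexHull_unit_triangle, ← ENNReal.ofReal_mul (abs_nonneg _),
    mul_one_div]

end RealTriangle

section LatticeTriangle

variable {a b c : ℤ × ℤ}

/-- The triangle, possibly degenerate, spanned by three lattice points. -/
def latticeTriangle (a b c : ℤ × ℤ) : Set (ℝ × ℝ) :=
  convexHull ℝ {toR2 a, toR2 b, toR2 c}

lemma latticeTriangle_swap (a b c : ℤ × ℤ) : latticeTriangle a c b = latticeTriangle a b c := by
  rw [latticeTriangle, Set.pair_comm, latticeTriangle]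

lemma triDet_toR2 (a b c : ℤ × ℤ) : triDet (toR2 a) (toR2 b) (toR2 c) = triDet a b c := by
  simp [triDet, toR2]

lemma two_mul_area_latticeTriangle (a b c : ℤ × ℤ) :
    2 * area (latticeTriangle a b c) = |triDet a b c| := by
  rw [area, latticeTriangle, volume_convexHull_triangle, ENNReal.toReal_ofReal (by positivity),
    triDet_toR2, Int.cast_abs]
  ring

lemma isLatticeTriangle_iff_exists_triDet_pos {T : Set (ℝ × ℝ)} :
    IsLatticeTriangle T ↔ ∃ a b c : ℤ × ℤ, 0 < triDet a b c ∧ T = latticeTriangle a b c := by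
  simp only [IsLatticeTriangle, affineIndependent_iff_triDet_ne_zero, triDet_toR2,
    Int.cast_ne_zero]
  constructor
  · rintro ⟨a, b, c, h, rfl⟩
    rcases h.lt_or_gt with hneg | hpos
    · exact ⟨a, c, b, by rw [triDet_swap]; omega, (latticeTriangle_swap a b c).symm⟩
    · exact ⟨a, b, c, hpos, rfl⟩
  · rintro ⟨a, b, c, h, rfl⟩
    exact ⟨a, b, c, h.ne', rfl⟩

lemma toR2_mem_latticeTriangle (h : 0 < triDet a b c) {z : ℤ × ℤ} :
    toR2 z ∈ latticeTriangle a b c ↔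
      0 ≤ triDet z b c ∧ 0 ≤ triDet a z c ∧ 0 ≤ triDet a b z := by
  rw [latticeTriangle, mem_convexHull_iff_triDet_nonneg (by rwa [triDet_toR2, Int.cast_pos])]
  simp only [triDet_toR2, Int.cast_nonneg_iff]

lemma toR2_mem_interior_latticeTriangle (h : 0 < triDet a b c) {z : ℤ × ℤ} :
    toR2 z ∈ interior (latticeTriangle a b c) ↔
      0 < triDet z b c ∧ 0 < triDet a z c ∧ 0 < triDet a b z := by
  rw [latticeTriangle,
    mem_interior_convexHull_iff_triDet_pos (by rwa [triDet_toR2, Int.cast_pos])]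
  simp only [triDet_toR2, Int.cast_pos]

lemma isClosed_latticeTriangle (a b c : ℤ × ℤ) : IsClosed (latticeTriangle a b c) :=
  ((Set.toFinite _).isCompact_convexHull ℝ).isClosed

/-- The lattice length of the segment `a b`: the number of primitive steps from `a` to `b`. -/
def latticeLength (a b : ℤ × ℤ) : ℕ := Int.gcd (b.1 - a.1) (b.2 - a.2)

/-- The lattice points on the side `a b` of the triangle `a b c`, with `a` and without `b`. -/
def sidePoints (a b c : ℤ × ℤ) : Set (ℤ × ℤ) :=
  {z | triDet a b z = 0 ∧ 0 ≤ triDet a z c ∧ 0 < triDet z b c}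

lemma latticeLength_dvd_triDet (a b c : ℤ × ℤ) : (latticeLength a b : ℤ) ∣ triDet a b c :=
  dvd_sub ((Int.gcd_dvd_left ..).mul_right _) ((Int.gcd_dvd_right ..).mul_right _)

lemma latticeLength_pos (h : 0 < triDet a b c) : 0 < latticeLength a b :=
  Nat.pos_of_ne_zero fun h₀ => h.ne' (by simpa [h₀] using latticeLength_dvd_triDet a b c)

lemma exists_isCoprime_eq_add_latticeLength_smul (h : 0 < latticeLength a b) :
    ∃ u : ℤ × ℤ, IsCoprime u.1 u.2 ∧ b = a + (latticeLength a b : ℤ) • u := by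
  obtain ⟨x, y, hxy, hx, hy⟩ := Int.exists_gcd_one h
  refine ⟨(x, y), Int.isCoprime_iff_gcd_eq_one.mpr hxy, ?_⟩
  ext
  · simp only [latticeLength, Prod.fst_add, Prod.smul_fst, smul_eq_mul]
    linarith
  · simp only [latticeLength, Prod.snd_add, Prod.smul_snd, smul_eq_mul]
    linarith

lemma sidePoints_add_smul {u : ℤ × ℤ} {n : ℤ} (hu : IsCoprime u.1 u.2) (hn : 0 < n)
    (h : 0 < triDet a (a + u) c) :
    sidePoints a (a + n • u) c = (fun k : ℤ => a + k • u) '' Set.Ico 0 n := by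
  have hpoint (k : ℤ) : a + k • u ∈ sidePoints a (a + n • u) c ↔ k ∈ Set.Ico 0 n := by
    have h₂ : triDet a (a + n • u) (a + k • u) = 0 := by simp [triDet]; ring
    have h₁ : triDet a (a + k • u) c = k * triDet a (a + u) c := triDet_add_smul_middle a c u k
    have h₀ : triDet (a + k • u) (a + n • u) c = (n - k) * triDet a (a + u) c := by
      linear_combination triDet_add_triDet_add_triDet a (a + n • u) c (a + k • u) - h₁ - h₂ +
        triDet_add_smul_middle a c u n
    rw [sidePoints, Set.mem_ofPred_eq, h₀, h₁, h₂]
    simp [h]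
  ext z
  constructor
  · intro hz
    have hline : triDet a (a + u) z = 0 := by
      simpa only [triDet_add_smul_middle, mul_eq_zero_iff_left hn.ne'] using hz.1
    obtain ⟨k, rfl⟩ := exists_eq_add_smul_of_triDet_eq_zero hu hline
    exact ⟨k, (hpoint k).mp hz, rfl⟩
  · rintro ⟨k, hk, rfl⟩
    exact (hpoint k).mpr hk

lemma ncard_sidePoints (h : 0 < triDet a b c) :
    (sidePoints a b c).ncard = latticeLength a b := by
  have hg : (0 : ℤ) < latticeLength a b := mod_cast latticeLength_pos h
  obtain ⟨u, hu, hb⟩ := exists_isCoprime_eq_add_latticeLength_smul (latticeLength_pos h)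
  have hm : 0 < triDet a (a + u) c := by
    rw [hb, triDet_add_smul_middle] at h
    exact pos_of_mul_pos_right h hg.le
  have hinj : Function.Injective fun k : ℤ => a + k • u :=
    (add_right_injective a).comp (smul_left_injective ℤ fun h₀ => hm.ne' (by simp [h₀, triDet]))
  calc (sidePoints a b c).ncard
      = ((fun k : ℤ => a + k • u) '' Set.Ico 0 (latticeLength a b : ℤ)).ncard := by
        rw [← sidePoints_add_smul hu hg hm, ← hb]
    _ = latticeLength a b := by
        rw [Set.ncard_image_of_injective _ hinj, ← Finset.coe_Ico, Set.ncard_coe_finset]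
        simp

lemma mem_sidePoints_rotate (a b c z : ℤ × ℤ) :
    z ∈ sidePoints b c a ↔ triDet z b c = 0 ∧ 0 ≤ triDet a b z ∧ 0 < triDet a z c := by
  rw [sidePoints, Set.mem_ofPred_eq, triDet_rotate z b c, triDet_rotate a b z,
    triDet_rotate a z c]

lemma mem_sidePoints_rotate_rotate (a b c z : ℤ × ℤ) :
    z ∈ sidePoints c a b ↔ triDet a z c = 0 ∧ 0 ≤ triDet z b c ∧ 0 < triDet a b z := by
  rw [mem_sidePoints_rotate b, triDet_rotate a z c, triDet_rotate z b c, triDet_rotate a b z]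

lemma setOf_toR2_mem_frontier_latticeTriangle (h : 0 < triDet a b c) :
    {z | toR2 z ∈ frontier (latticeTriangle a b c)} =
      sidePoints a b c ∪ (sidePoints b c a ∪ sidePoints c a b) := by
  ext z
  have hsum := triDet_add_triDet_add_triDet a b c z
  rw [Set.mem_ofPred_eq, (isClosed_latticeTriangle a b c).frontier_eq, Set.mem_sdiff,
    toR2_mem_latticeTriangle h, toR2_mem_interior_latticeTriangle h, Set.mem_union,
    Set.mem_union, mem_sidePoints_rotate a, mem_sidePoints_rotate_rotate a, sidePoints,
    Set.mem_ofPred_eq]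
  omega

lemma disjoint_sidePoints_rotate : Disjoint (sidePoints a b c) (sidePoints b c a) := by
  rw [Set.disjoint_left]
  intro z hz hz'
  exact hz.2.2.ne' ((mem_sidePoints_rotate a b c z).mp hz').1

lemma finite_sidePoints (h : 0 < triDet a b c) : (sidePoints a b c).Finite :=
  Set.finite_of_ncard_pos (by rw [ncard_sidePoints h]; exact latticeLength_pos h)

theorem bcount_latticeTriangle (h : 0 < triDet a b c) :
    bcount (latticeTriangle a b c) =
      latticeLength a b + latticeLength b c + latticeLength c a := by
  have hbca : 0 < triDet b c a := by rwa [triDet_rotate]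
  have hcab : 0 < triDet c a b := by rwa [triDet_rotate]
  rw [bcount, setOf_toR2_mem_frontier_latticeTriangle h,
    Set.ncard_union_eq (Set.disjoint_union_right.mpr
      ⟨disjoint_sidePoints_rotate, disjoint_sidePoints_rotate.symm⟩) (finite_sidePoints h)
      ((finite_sidePoints hbca).union (finite_sidePoints hcab)),
    Set.ncard_union_eq disjoint_sidePoints_rotate (finite_sidePoints hbca)
      (finite_sidePoints hcab),
    ncard_sidePoints h, ncard_sidePoints hbca, ncard_sidePoints hcab, add_assoc]

/-- The lattice points of the half-open parallelogram with vertices `a`, `b`, `c`, `b + c - a`. -/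
def parallelogramPoints (a b c : ℤ × ℤ) : Set (ℤ × ℤ) :=
  {z | triDet a z c ∈ Set.Ico 0 (triDet a b c) ∧ triDet a b z ∈ Set.Ico 0 (triDet a b c)}

lemma card_quotient_range_sideMap (h : triDet a b c ≠ 0) :
    Nat.card ((ℤ × ℤ) ⧸ (sideMap a b c).range) = (triDet a b c).natAbs := by
  have hinj : Function.Injective (sideMap a b c) := by
    rw [← LinearMap.ker_eq_bot]
    contrapose! h
    rwa [← det_sideMap, LinearMap.det_eq_zero_iff_ker_ne_bot]
  rw [← Submodule.natAbs_det_equiv _ (LinearEquiv.ofInjective _ hinj), ← det_sideMap]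
  rfl

lemma injOn_mkQ_parallelogramPoints (h : triDet a b c ≠ 0) :
    Set.InjOn (sideMap a b c).range.mkQ (parallelogramPoints a b c) := by
  intro z hz z' hz' hzz'
  obtain ⟨q, hq⟩ := (Submodule.Quotient.eq _).mp hzz'
  obtain rfl : z = z' + sideMap a b c q := by rw [hq, add_sub_cancel]
  refine eq_of_triDet_eq h ?_ ?_
  · rw [← Int.emod_eq_of_lt hz.1.1 hz.1.2, triDet_add_sideMap_middle, Int.add_mul_emod_self_right,
      Int.emod_eq_of_lt hz'.1.1 hz'.1.2]
  · rw [← Int.emod_eq_of_lt hz.2.1 hz.2.2, triDet_add_sideMap_right, Int.add_mul_emod_self_right,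
      Int.emod_eq_of_lt hz'.2.1 hz'.2.2]

lemma surjOn_mkQ_parallelogramPoints (h : 0 < triDet a b c) :
    Set.SurjOn (sideMap a b c).range.mkQ (parallelogramPoints a b c) Set.univ := by
  intro x _
  obtain ⟨z, rfl⟩ := Submodule.mkQ_surjective _ x
  set q : ℤ × ℤ := (-(triDet a z c / triDet a b c), -(triDet a b z / triDet a b c))
  refine ⟨z + sideMap a b c q, ⟨?_, ?_⟩, ?_⟩
  · rw [triDet_add_sideMap_middle, neg_mul, ← sub_eq_add_neg, mul_comm, ← Int.emod_def]
    exact ⟨Int.emod_nonneg _ h.ne', Int.emod_lt_of_pos _ h⟩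
  · rw [triDet_add_sideMap_right, neg_mul, ← sub_eq_add_neg, mul_comm, ← Int.emod_def]
    exact ⟨Int.emod_nonneg _ h.ne', Int.emod_lt_of_pos _ h⟩
  · rw [map_add, add_eq_left, Submodule.mkQ_apply, Submodule.Quotient.mk_eq_zero]
    exact LinearMap.mem_range_self _ q

lemma ncard_parallelogramPoints (h : 0 < triDet a b c) :
    (parallelogramPoints a b c).ncard = (triDet a b c).natAbs := by
  rw [← card_quotient_range_sideMap h.ne', ← Set.ncard_univ,
    ← (injOn_mkQ_parallelogramPoints h.ne').ncard_image,
    (surjOn_mkQ_parallelogramPoints h).image_eq_of_mapsTo (Set.mapsTo_univ _ _)]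

lemma finite_parallelogramPoints (h : 0 < triDet a b c) : (parallelogramPoints a b c).Finite :=
  Set.finite_of_ncard_pos (by rw [ncard_parallelogramPoints h]; omega)

lemma ncard_insert_insert_parallelogramPoints (h : 0 < triDet a b c) :
    (insert b (insert c (parallelogramPoints a b c))).ncard = (triDet a b c).natAbs + 2 := by
  have hfin := finite_parallelogramPoints h
  have hc : c ∉ parallelogramPoints a b c := fun hc => hc.2.2.false
  have hb : b ∉ insert c (parallelogramPoints a b c) := by
    rintro (rfl | hb)
    · exact h.ne' (triDet_self a b)
    · exact hb.1.2.false
  rw [Set.ncard_insert_of_notMem hb (hfin.insert c), Set.ncard_insert_of_notMem hc hfin,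
    ncard_parallelogramPoints h]

/-- The lattice points interior to the reflection of the triangle `a b c` in the midpoint of its
side `b c`. -/
def reflectedInteriorPoints (a b c : ℤ × ℤ) : Set (ℤ × ℤ) :=
  {z | toR2 (b + c - z) ∈ interior (latticeTriangle a b c)}

lemma ncard_reflectedInteriorPoints (a b c : ℤ × ℤ) :
    (reflectedInteriorPoints a b c).ncard = icount (latticeTriangle a b c) := by
  have himage : reflectedInteriorPoints a b c =
      (b + c - ·) '' {z | toR2 z ∈ interior (latticeTriangle a b c)} := by
    ext z
    refine ⟨fun hz => ⟨b + c - z, hz, sub_sub_cancel _ _⟩, ?_⟩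
    rintro ⟨y, hy, rfl⟩
    simpa only [reflectedInteriorPoints, Set.mem_ofPred_eq, sub_sub_cancel] using hy
  rw [himage, Set.ncard_image_of_injective _ sub_right_injective, icount]

lemma mem_reflectedInteriorPoints (h : 0 < triDet a b c) {z : ℤ × ℤ} :
    z ∈ reflectedInteriorPoints a b c ↔
      triDet z b c < 0 ∧ triDet a z c < triDet a b c ∧ triDet a b z < triDet a b c := by
  have h₀ : triDet (b + c - z) b c = -triDet z b c := by simp [triDet]; ring
  have h₁ : triDet a (b + c - z) c = triDet a b c - triDet a z c := by simp [triDet]; ring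
  have h₂ : triDet a b (b + c - z) = triDet a b c - triDet a b z := by simp [triDet]; ring
  rw [reflectedInteriorPoints, Set.mem_ofPred_eq, toR2_mem_interior_latticeTriangle h, h₀, h₁, h₂,
    neg_pos, sub_pos, sub_pos]

lemma latticePoints_union_reflectedInteriorPoints (h : 0 < triDet a b c) :
    {z | toR2 z ∈ latticeTriangle a b c} ∪ reflectedInteriorPoints a b c =
      insert b (insert c (parallelogramPoints a b c)) := by
  ext z
  have hsum := triDet_add_triDet_add_triDet a b c z
  have hb : z = b ↔ triDet a z c = triDet a b c ∧ triDet a b z = 0 := by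
    refine ⟨?_, fun hz => eq_of_triDet_eq h.ne' hz.1 (hz.2.trans (triDet_self a b).symm)⟩
    rintro rfl
    exact ⟨rfl, triDet_self a z⟩
  have hc : z = c ↔ triDet a z c = 0 ∧ triDet a b z = triDet a b c := by
    refine ⟨?_, fun hz => eq_of_triDet_eq h.ne' (hz.1.trans (triDet_self a c).symm) hz.2⟩
    rintro rfl
    exact ⟨triDet_self a z, rfl⟩
  rw [Set.mem_union, Set.mem_ofPred_eq, toR2_mem_latticeTriangle h, mem_reflectedInteriorPoints h,
    Set.mem_insert_iff, Set.mem_insert_iff, hb, hc, parallelogramPoints, Set.mem_ofPred_eq,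
    Set.mem_Ico, Set.mem_Ico]
  omega

lemma ncard_setOf_toR2_mem_latticeTriangle
    (hfin : {z | toR2 z ∈ latticeTriangle a b c}.Finite) :
    {z | toR2 z ∈ latticeTriangle a b c}.ncard =
      bcount (latticeTriangle a b c) + icount (latticeTriangle a b c) := by
  have hunion : {z | toR2 z ∈ latticeTriangle a b c} =
      {z | toR2 z ∈ frontier (latticeTriangle a b c)} ∪
        {z | toR2 z ∈ interior (latticeTriangle a b c)} := by
    ext z
    rw [Set.mem_union, or_comm]
    exact Set.ext_iff.mp ((isClosed_latticeTriangle a b c).closure_eq.symm.trans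
      (closure_eq_interior_union_frontier _)) (toR2 z)
  rw [hunion] at hfin ⊢
  rw [bcount, icount]
  exact Set.ncard_union_eq (disjoint_interior_frontier.symm.preimage toR2)
    (hfin.subset Set.subset_union_left) (hfin.subset Set.subset_union_right)

theorem bcount_add_two_mul_icount_latticeTriangle (h : 0 < triDet a b c) :
    bcount (latticeTriangle a b c) + 2 * icount (latticeTriangle a b c) =
      (triDet a b c).natAbs + 2 := by
  have hunion := latticePoints_union_reflectedInteriorPoints h
  have hfin : (insert b (insert c (parallelogramPoints a b c))).Finite :=
    ((finite_parallelogramPoints h).insert c).insert b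
  have hfinT := hfin.subset (hunion ▸ Set.subset_union_left)
  have hfinR := hfin.subset (hunion ▸ Set.subset_union_right)
  have hdisj : Disjoint {z | toR2 z ∈ latticeTriangle a b c} (reflectedInteriorPoints a b c) :=
    Set.disjoint_left.mpr fun z hz hz' =>
      ((toR2_mem_latticeTriangle h).mp hz).1.not_gt ((mem_reflectedInteriorPoints h).mp hz').1
  rw [← ncard_insert_insert_parallelogramPoints h, ← hunion, Set.ncard_union_eq hdisj hfinT hfinR,
    ncard_setOf_toR2_mem_latticeTriangle hfinT, ncard_reflectedInteriorPoints]
  ring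

end LatticeTriangle

lemma bcount_icount_of_two_mul_area_eq_prime {p : ℕ} (hp : p.Prime) {T : Set (ℝ × ℝ)}
    (hT : IsLatticeTriangle T) (harea : 2 * area T = p) :
    (bcount T = 3 ∧ icount T = (p - 1) / 2) ∨ (bcount T = p + 2 ∧ icount T = 0) := by
  obtain ⟨a, b, c, h, rfl⟩ := isLatticeTriangle_iff_exists_triDet_pos.mp hT
  have hD : triDet a b c = p := by
    rw [two_mul_area_latticeTriangle, abs_of_pos h] at harea
    exact_mod_cast harea
  have hlength {v w x : ℤ × ℤ} (hvwx : triDet v w x = p) :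
      latticeLength v w = 1 ∨ latticeLength v w = p := by
    rw [← Nat.dvd_prime hp, ← Int.natCast_dvd_natCast, ← hvwx]
    exact latticeLength_dvd_triDet v w x
  have hab := hlength hD
  have hbc := hlength ((triDet_rotate a b c).trans hD)
  have hca := hlength ((triDet_rotate c a b).symm.trans hD)
  have hpick := bcount_add_two_mul_icount_latticeTriangle h
  have hb := bcount_latticeTriangle h
  have := hp.two_le
  omega

lemma exists_isLatticeTriangle_bcount_eq_gcd {n : ℕ} (hn : 0 < n) (k : ℤ) :
    ∃ T, IsLatticeTriangle T ∧ 2 * area T = n ∧ bcount T + 2 * icount T = n + 2 ∧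
      bcount T = 1 + Int.gcd (k - 1) n + Int.gcd k n := by
  have hD : triDet (0, 0) (1, 0) (k, (n : ℤ)) = n := by simp [triDet]
  have h : 0 < triDet (0, 0) (1, 0) (k, (n : ℤ)) := by omega
  refine ⟨latticeTriangle (0, 0) (1, 0) (k, n),
    isLatticeTriangle_iff_exists_triDet_pos.mpr ⟨_, _, _, h, rfl⟩, ?_, ?_, ?_⟩
  · simp [two_mul_area_latticeTriangle, hD]
  · simpa [hD] using bcount_add_two_mul_icount_latticeTriangle h
  · simp [bcount_latticeTriangle h, latticeLength]

/-- For an odd prime `p`, the lattice triangles of normalized volume `p` (i.e. `2a(T) = p`)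
realize exactly the pairs `(b, i) ∈ {(3, (p−1)/2), (p+2, 0)}`. -/
theorem prime_volume_triangles (p : ℕ) (hp : p.Prime) (hodd : Odd p) :
    (∀ T : Set (ℝ × ℝ), IsLatticeTriangle T → 2 * area T = (p : ℝ) →
      (bcount T = 3 ∧ icount T = (p - 1) / 2) ∨ (bcount T = p + 2 ∧ icount T = 0)) ∧
    (∃ T : Set (ℝ × ℝ), IsLatticeTriangle T ∧ 2 * area T = (p : ℝ) ∧
      bcount T = 3 ∧ icount T = (p - 1) / 2) ∧
    (∃ T : Set (ℝ × ℝ), IsLatticeTriangle T ∧ 2 * area T = (p : ℝ) ∧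
      bcount T = p + 2 ∧ icount T = 0) := by
  refine ⟨fun T hT harea => bcount_icount_of_two_mul_area_eq_prime hp hT harea, ?_, ?_⟩
  · obtain ⟨T, hT, harea, hpick, hb⟩ := exists_isLatticeTriangle_bcount_eq_gcd hp.pos 2
    have hgcd : Int.gcd 2 p = 1 := Nat.coprime_two_left.mpr hodd
    have hb3 : bcount T = 3 := by simpa [hgcd] using hb
    exact ⟨T, hT, harea, hb3, by omega⟩
  · obtain ⟨T, hT, harea, hpick, hb⟩ := exists_isLatticeTriangle_bcount_eq_gcd hp.pos 0
    have hbp : bcount T = p + 2 := by simpa [add_comm _ p] using hb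
    exact ⟨T, hT, harea, hbp, by omega⟩
end

section
/- Every lattice triangle T satisfies a(T) ≥ w(T)²/4, where w(T) denotes the lattice width of T. Equivalently, for every lattice triangle T of area a there exists a nonzero linear functional u : ℤ² → ℤ such that (max_{x ∈ T} u(x) − min_{x ∈ T} u(x))² ≤ 4a. -/
open MeasureTheory

/-!
The functionals whose width on a triangle with edge vectors `e₁, e₂` is at most `r` are those whose
values `(s, t)` on `e₁, e₂` lie in the hexagon `|s|, |t|, |s - t| ≤ r`, of area `3 r²`. On integral
functionals, `(s, t)` runs through a lattice whose covolume is `|det (e₁, e₂)| = 2a`, so Minkowski's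
theorem yields a nonzero one as soon as `3 r² ≥ 4 · 2a`. The resulting bound `w² ≤ 8a/3` is attained
by the triangle with vertices `(0,0), (1,2), (2,1)`.
-/

open Module Matrix

/-- The width of the plane set `P` in the direction of the linear functional `x ↦ a x₁ + b x₂`.
It is spelled out with `sSup` and `sInf`, so it is meaningful only for bounded `P`. -/
noncomputable def widthAlong (a b : ℝ) (P : Set (ℝ × ℝ)) : ℝ :=
  sSup ((fun x : ℝ × ℝ => a * x.1 + b * x.2) '' P) -
    sInf ((fun x : ℝ × ℝ => a * x.1 + b * x.2) '' P)

/-- The matrix sending the coefficients of a linear functional on `ℝ²` to its values on the edge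
vectors `v₁ - v₀` and `v₂ - v₀`. -/
def edgeMatrix (v₀ v₁ v₂ : ℝ × ℝ) : Matrix (Fin 2) (Fin 2) ℝ :=
  !![(v₁ - v₀).1, (v₁ - v₀).2; (v₂ - v₀).1, (v₂ - v₀).2]

/-- The norm on `ℝ²` whose unit ball is the hexagon `|x₀|, |x₁|, |x₀ - x₁| ≤ 1`. It measures the
width of a triangle in terms of the values of a functional on two edge vectors. -/
def hexNorm (x : Fin 2 → ℝ) : ℝ :=
  max (max |x 0| |x 1|) |x 0 - x 1|

lemma sSup_sub_sInf_image_convexHull {E : Type*} [AddCommGroup E] [Module ℝ E] (f : E →ₗ[ℝ] ℝ)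
    {s : Set E} (hs : Bornology.IsBounded (f '' s)) :
    sSup (f '' convexHull ℝ s) - sInf (f '' convexHull ℝ s) = Metric.diam (f '' s) := by
  rw [f.image_convexHull, ← Real.diam_eq (isBounded_convexHull.2 hs), convexHull_diam]

lemma widthAlong_convexHull_triple (a b : ℝ) (v₀ v₁ v₂ : ℝ × ℝ) :
    widthAlong a b (convexHull ℝ {v₀, v₁, v₂}) = hexNorm (edgeMatrix v₀ v₁ v₂ *ᵥ ![a, b]) := by
  let f : ℝ × ℝ →ₗ[ℝ] ℝ := a • .fst ℝ ℝ ℝ + b • .snd ℝ ℝ ℝ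
  have hedges : edgeMatrix v₀ v₁ v₂ *ᵥ ![a, b] = ![f v₁ - f v₀, f v₂ - f v₀] := by
    ext i
    fin_cases i <;> simp [edgeMatrix, f] <;> ring
  calc widthAlong a b (convexHull ℝ {v₀, v₁, v₂})
    _ = Metric.diam (f '' {v₀, v₁, v₂}) :=
      sSup_sub_sInf_image_convexHull f ((Set.toFinite _).image f).isBounded
    _ = max (max |f v₀ - f v₁| |f v₀ - f v₂|) |f v₁ - f v₂| := by
      simp only [Set.image_insert_eq, Set.image_singleton, Metric.diam_triple, Real.dist_eq]
    _ = hexNorm (edgeMatrix v₀ v₁ v₂ *ᵥ ![a, b]) := by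
      simp [hexNorm, hedges, abs_sub_comm (f v₀)]

section Minkowski

variable {ι : Type*} [Fintype ι] [DecidableEq ι]

lemma exists_int_mulVec_mem_of_det_mul_two_pow_le_volume [Nonempty ι] {M : Matrix ι ι ℝ}
    (hM : M.det ≠ 0) {s : Set (ι → ℝ)} (h_symm : ∀ x ∈ s, -x ∈ s) (h_conv : Convex ℝ s)
    (h_cpt : IsCompact s)
    (h : ENNReal.ofReal |M.det| * 2 ^ Fintype.card ι ≤ volume s) :
    ∃ u : ι → ℤ, u ≠ 0 ∧ M *ᵥ (fun i => (u i : ℝ)) ∈ s := by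
  classical
  let b : Basis ι ℝ (ι → ℝ) :=
    basisOfPiSpaceOfLinearIndependent (linearIndependent_cols_of_det_ne_zero hM)
  have hb : ⇑b = M.col := coe_basisOfPiSpaceOfLinearIndependent _
  have hvol : volume (ZSpan.fundamentalDomain b) = ENNReal.ofReal |M.det| := by
    rw [ZSpan.volume_fundamentalDomain, hb, ← det_transpose M]
    rfl
  have : Countable (Submodule.span ℤ (Set.range b)).toAddSubgroup :=
    inferInstanceAs (Countable (Submodule.span ℤ (Set.range b)))
  obtain ⟨⟨x, hx⟩, hx0, hxs⟩ := exists_ne_zero_mem_lattice_of_measure_mul_two_pow_le_measure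
    (ZSpan.isAddFundamentalDomain' b volume) h_symm h_conv h_cpt
    (by rwa [hvol, finrank_fintype_fun_eq_card])
  obtain ⟨u, rfl⟩ := (Submodule.mem_span_range_iff_exists_fun ℤ).1 hx
  refine ⟨u, ?_, ?_⟩
  · rintro rfl
    exact hx0 (by simp)
  · convert hxs using 1
    ext i
    simp [hb, mulVec, dotProduct, mul_comm]

end Minkowski

lemma volume_region_between_cc_eq_lintegral {α : Type*} [MeasurableSpace α] (μ : Measure α)
    {f g : α → ℝ} (hf : Measurable f) (hg : Measurable g) {s : Set α} (hs : MeasurableSet s) :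
    μ.prod volume {p : α × ℝ | p.1 ∈ s ∧ p.2 ∈ Set.Icc (f p.1) (g p.1)} =
      ∫⁻ x in s, ENNReal.ofReal (g x - f x) ∂μ := by
  rw [Measure.prod_apply (measurableSet_region_between_cc hf hg hs), ← lintegral_indicator hs]
  refine lintegral_congr fun x => ?_
  by_cases hx : x ∈ s
  · simp only [Set.preimage_ofPred_eq, hx, true_and, Set.ofPred_mem_eq, Real.volume_Icc,
      Set.indicator_of_mem]
  · simp [hx]

lemma volume_region_between_cc_eq_integral {f g : ℝ → ℝ} (hf : Continuous f)
    (hg : Continuous g) {a b : ℝ} (hab : a ≤ b) (hfg : ∀ x ∈ Set.Icc a b, f x ≤ g x) :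
    volume {p : ℝ × ℝ | p.1 ∈ Set.Icc a b ∧ p.2 ∈ Set.Icc (f p.1) (g p.1)} =
      ENNReal.ofReal (∫ x in a..b, (g x - f x)) := by
  rw [Measure.volume_eq_prod,
    volume_region_between_cc_eq_lintegral _ hf.measurable hg.measurable measurableSet_Icc,
    intervalIntegral.integral_of_le hab, ← integral_Icc_eq_integral_Ioc,
    ← ofReal_integral_eq_lintegral_ofReal (f := fun x => g x - f x) (hg.sub hf).integrableOn_Icc]
  exact (ae_restrict_iff' measurableSet_Icc).2 (.of_forall fun x hx => sub_nonneg.2 (hfg x hx))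

lemma hexNorm_nonneg (x : Fin 2 → ℝ) : 0 ≤ hexNorm x :=
  (abs_nonneg _).trans (le_max_right _ _)

lemma hexNorm_neg (x : Fin 2 → ℝ) : hexNorm (-x) = hexNorm x := by
  simp [hexNorm, neg_add_eq_sub, abs_sub_comm (x 1)]

lemma convexOn_hexNorm : ConvexOn ℝ Set.univ hexNorm := by
  have habs (f : (Fin 2 → ℝ) →ₗ[ℝ] ℝ) : ConvexOn ℝ Set.univ fun x => |f x| :=
    (convexOn_norm convex_univ).comp_linearMap f
  exact ((habs (.proj 0)).sup (habs (.proj 1))).sup (habs (.proj 0 - .proj 1))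

lemma convex_hexNorm_le (r : ℝ) : Convex ℝ {x | hexNorm x ≤ r} := by
  simpa using convexOn_hexNorm.convex_le r

lemma isCompact_hexNorm_le (r : ℝ) : IsCompact {x | hexNorm x ≤ r} := by
  have hclosed : IsClosed {x | hexNorm x ≤ r} :=
    isClosed_le (by unfold hexNorm; fun_prop) continuous_const
  refine (isCompact_univ_pi fun _ => isCompact_Icc (a := -r) (b := r)).of_isClosed_subset
    hclosed fun x hx i _ => ?_
  have hle : (|x 0| ≤ r ∧ |x 1| ≤ r) ∧ |x 0 - x 1| ≤ r := by
    simpa only [hexNorm, Set.mem_ofPred_eq, max_le_iff] using hx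
  fin_cases i
  exacts [abs_le.1 hle.1.1, abs_le.1 hle.1.2]

lemma integral_two_mul_sub_abs {r : ℝ} (hr : 0 ≤ r) : ∫ x in -r..r, (2 * r - |x|) = 3 * r ^ 2 := by
  have habs : ∫ x in -r..r, |x| = r ^ 2 := by
    have hneg : ∫ x in -r..0, |x| = ∫ x in 0..r, |x| := by
      simpa using (intervalIntegral.integral_comp_neg (a := -r) (b := 0) fun x : ℝ => |x|)
    have hpos : ∫ x in 0..r, |x| = ∫ x in 0..r, x :=
      intervalIntegral.integral_congr fun x hx => abs_of_nonneg (Set.uIcc_of_le hr ▸ hx).1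
    rw [← intervalIntegral.integral_add_adjacent_intervals (b := 0)
      (continuous_abs.intervalIntegrable _ _) (continuous_abs.intervalIntegrable _ _),
      hneg, hpos, integral_id]
    ring
  rw [intervalIntegral.integral_sub (by simp) (continuous_abs.intervalIntegrable _ _), habs,
    intervalIntegral.integral_const, smul_eq_mul]
  ring

lemma volume_hexNorm_le {r : ℝ} (hr : 0 ≤ r) :
    volume {x | hexNorm x ≤ r} = ENNReal.ofReal (3 * r ^ 2) := by
  have hpre : {x | hexNorm x ≤ r} = MeasurableEquiv.finTwoArrow ⁻¹' {p : ℝ × ℝ |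
      p.1 ∈ Set.Icc (-r) r ∧ p.2 ∈ Set.Icc (max (-r) (p.1 - r)) (min r (p.1 + r))} := by
    ext x
    simp only [hexNorm, Set.mem_ofPred_eq, max_le_iff, abs_le, Set.mem_preimage,
      MeasurableEquiv.finTwoArrow_apply, Set.mem_Icc, le_min_iff]
    grind
  have hlen (x : ℝ) : min r (x + r) - max (-r) (x - r) = 2 * r - |x| := by
    grind
  rw [hpre, (volume_preserving_finTwoArrow ℝ).measure_preimage_equiv,
    volume_region_between_cc_eq_integral (f := fun x => max (-r) (x - r))
      (g := fun x => min r (x + r)) (by fun_prop) (by fun_prop) (by linarith),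
    ← integral_two_mul_sub_abs hr]
  · simp only [hlen]
  · intro x hx
    have := abs_le.2 hx
    linarith [hlen x]

lemma exists_int_hexNorm_mulVec_sq_le {M : Matrix (Fin 2) (Fin 2) ℝ} (hM : M.det ≠ 0) :
    ∃ u : ℤ × ℤ, u ≠ 0 ∧ hexNorm (M *ᵥ ![(u.1 : ℝ), (u.2 : ℝ)]) ^ 2 ≤ 4 / 3 * |M.det| := by
  have hvol : ENNReal.ofReal |M.det| * 2 ^ Fintype.card (Fin 2) =
      volume {x | hexNorm x ≤ √(4 / 3 * |M.det|)} := by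
    rw [volume_hexNorm_le (Real.sqrt_nonneg _), Real.sq_sqrt (by positivity), Fintype.card_fin,
      ← ENNReal.ofReal_ofNat, ← ENNReal.ofReal_pow zero_le_two,
      ← ENNReal.ofReal_mul (abs_nonneg _)]
    congr 1
    ring
  obtain ⟨u, hu, hle⟩ := exists_int_mulVec_mem_of_det_mul_two_pow_le_volume hM
    (fun x hx => (hexNorm_neg x).trans_le hx) (convex_hexNorm_le _) (isCompact_hexNorm_le _)
    hvol.le
  have hcoe : (fun i => (u i : ℝ)) = ![(u 0 : ℝ), (u 1 : ℝ)] := by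
    ext i
    fin_cases i <;> rfl
  refine ⟨(u 0, u 1), fun h => hu ?_, ?_⟩
  · ext i
    fin_cases i
    exacts [congrArg Prod.fst h, congrArg Prod.snd h]
  · rw [← hcoe]
    exact (Real.le_sqrt (hexNorm_nonneg _) (by positivity)).1 hle

lemma addHaar_image_affineMap {E : Type*} [NormedAddCommGroup E] [NormedSpace ℝ E]
    [MeasurableSpace E] [BorelSpace E] [FiniteDimensional ℝ E] (μ : Measure E)
    [μ.IsAddHaarMeasure] (f : E →ᵃ[ℝ] E) (s : Set E) :
    μ (f '' s) = ENNReal.ofReal |LinearMap.det f.linear| * μ s := by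
  have hf : ⇑f = (· + f 0) ∘ f.linear := f.decomp
  rw [hf, Set.image_comp, Set.image_add_right, measure_preimage_add_right,
    Measure.addHaar_image_linearMap]

lemma convexHull_zero_basis_eq_setOf :
    convexHull ℝ {(0 : ℝ × ℝ), (1, 0), (0, 1)} =
      {p | p.1 ∈ Set.Icc 0 1 ∧ p.2 ∈ Set.Icc 0 (1 - p.1)} := by
  apply subset_antisymm
  · apply convexHull_min
    · rintro _ (rfl | rfl | rfl) <;> simp
    · rintro ⟨x₁, x₂⟩ ⟨⟨hx₁, -⟩, hx₂, hx⟩ ⟨y₁, y₂⟩ ⟨⟨hy₁, -⟩, hy₂, hy⟩ a b ha hb hab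
      have hfst : 0 ≤ a * x₁ + b * y₁ := by positivity
      have hsnd : 0 ≤ a * x₂ + b * y₂ := by positivity
      have hsum : a * x₂ + b * y₂ ≤ 1 - (a * x₁ + b * y₁) := by
        nlinarith
      have hfst_le : a * x₁ + b * y₁ ≤ 1 := by linarith
      exact ⟨⟨hfst, hfst_le⟩, hsnd, hsum⟩
  · rintro ⟨x, y⟩ ⟨⟨hx, -⟩, hy, hxy⟩
    simp only at hx hy hxy
    have hzero : 0 ≤ 1 - x - y := by linarith
    have hsum : 1 - x - y + x + y = 1 := by ring
    refine mem_convexHull_of_exists_fintype ![1 - x - y, x, y] ![0, (1, 0), (0, 1)] ?_ ?_ ?_ ?_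
    · intro i
      fin_cases i
      exacts [hzero, hx, hy]
    · simpa [Fin.sum_univ_three] using hsum
    · intro i
      fin_cases i <;> simp
    · simp [Fin.sum_univ_three]

lemma volume_convexHull_zero_basis :
    volume (convexHull ℝ {(0 : ℝ × ℝ), (1, 0), (0, 1)}) = ENNReal.ofReal (1 / 2) := by
  rw [convexHull_zero_basis_eq_setOf, volume_region_between_cc_eq_integral (f := fun _ => 0)
    (g := fun x => 1 - x) (by fun_prop) (by fun_prop) zero_le_one (by simp)]
  congr 1
  rw [intervalIntegral.integral_congr (g := fun x : ℝ => 1 - x) (by intro; simp),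
    intervalIntegral.integral_sub (by simp) (by simp)]
  norm_num

lemma area_convexHull_triple (v₀ v₁ v₂ : ℝ × ℝ) :
    area (convexHull ℝ {v₀, v₁, v₂}) = |(edgeMatrix v₀ v₁ v₂).det| / 2 := by
  let L := toLin (Basis.finTwoProd ℝ) (Basis.finTwoProd ℝ)
    !![(v₁ - v₀).1, (v₂ - v₀).1; (v₁ - v₀).2, (v₂ - v₀).2]
  let f : ℝ × ℝ →ᵃ[ℝ] ℝ × ℝ := L.toAffineMap + AffineMap.const ℝ _ v₀
  have hL (x : ℝ × ℝ) : L x = x.1 • (v₁ - v₀) + x.2 • (v₂ - v₀) := by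
    ext <;> simp [L, toLin_finTwoProd_apply] <;> ring
  have himage : convexHull ℝ {v₀, v₁, v₂} = f '' convexHull ℝ {(0 : ℝ × ℝ), (1, 0), (0, 1)} := by
    rw [f.image_convexHull, Set.image_insert_eq, Set.image_pair]
    simp [f, hL]
  have hdet : LinearMap.det f.linear = (edgeMatrix v₀ v₁ v₂).det := by
    simp only [f, L, edgeMatrix, AffineMap.add_linear, LinearMap.toAffineMap_linear,
      AffineMap.const_linear, add_zero, LinearMap.det_toLin, det_fin_two_of]
    ring
  rw [area, himage, addHaar_image_affineMap, volume_convexHull_zero_basis, hdet,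
    ← ENNReal.ofReal_mul (abs_nonneg _), ENNReal.toReal_ofReal (by positivity)]
  ring

lemma area_convexHull_triple_pos {v₀ v₁ v₂ : ℝ × ℝ} (hv : AffineIndependent ℝ ![v₀, v₁, v₂]) :
    0 < area (convexHull ℝ {v₀, v₁, v₂}) := by
  have hspan : affineSpan ℝ {v₀, v₁, v₂} = ⊤ := by
    have := hv.affineSpan_eq_top_iff_card_eq_finrank_add_one.2 (by simp)
    rwa [range_cons, range_cons_cons_empty, Set.singleton_union] at this
  have hint : (interior (convexHull ℝ {v₀, v₁, v₂})).Nonempty :=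
    interior_convexHull_nonempty_iff_affineSpan_eq_top.2 hspan
  have hfin : volume (convexHull ℝ {v₀, v₁, v₂}) < ⊤ :=
    ((Set.toFinite _).isCompact_convexHull ℝ).measure_lt_top
  exact ENNReal.toReal_pos (Measure.measure_pos_of_nonempty_interior _ hint).ne' hfin.ne

theorem area_ge_width_sq_div_four_general {v₀ v₁ v₂ : ℝ × ℝ}
    (hv : AffineIndependent ℝ ![v₀, v₁, v₂]) :
    ∃ u : ℤ × ℤ, u ≠ 0 ∧
      widthAlong u.1 u.2 (convexHull ℝ {v₀, v₁, v₂}) ^ 2 ≤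
        8 / 3 * area (convexHull ℝ {v₀, v₁, v₂}) := by
  have harea := area_convexHull_triple v₀ v₁ v₂
  have hdet : (edgeMatrix v₀ v₁ v₂).det ≠ 0 := by
    intro h
    simpa [harea, h] using area_convexHull_triple_pos hv
  obtain ⟨u, hu, hle⟩ := exists_int_hexNorm_mulVec_sq_le hdet
  refine ⟨u, hu, ?_⟩
  rw [widthAlong_convexHull_triple]
  linarith

/-- Every lattice triangle `T` satisfies `a(T) ≥ w(T)²/4`: there is a nonzero integer
linear functional `u` whose width `max_{x ∈ T} u(x) − min_{x ∈ T} u(x)` on `T` satisfies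
`(max u − min u)² ≤ 4·a(T)`. -/
theorem area_ge_width_sq_div_four (T : Set (ℝ × ℝ)) (hT : IsLatticeTriangle T) :
    ∃ u : ℤ × ℤ, u ≠ 0 ∧
      (sSup ((fun x : ℝ × ℝ => (u.1 : ℝ) * x.1 + (u.2 : ℝ) * x.2) '' T) -
        sInf ((fun x : ℝ × ℝ => (u.1 : ℝ) * x.1 + (u.2 : ℝ) * x.2) '' T)) ^ 2 ≤
      4 * area T := by
  obtain ⟨v₀, v₁, v₂, hv, rfl⟩ := hT
  obtain ⟨u, hu, hle⟩ := area_ge_width_sq_div_four_general hv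
  refine ⟨u, hu, hle.trans ?_⟩
  linarith [area_convexHull_triple_pos hv]
end

section
/- Let c ≥ 2 be an integer and let T be a lattice triangle with vertices (0,0), (q, 0), (s, p) where p > 0, q > 0, so that a(T) = p·q/2. If (2·a(T) + 1 + 2(c+1)²)/(c+1) ≤ b(T) ≤ q + 2p, then (p − c − 1)·q ≤ 2(c+1)(p − c − 1) − 1; in particular p ≠ c + 1. -/
/-!
Applying a linear map to the unit triangle shows that a triangle with edge vectors `u` and `v` has
area `|det (u, v)| / 2`, which is `p q / 2` here. Writing `r = c + 1`, the lower and upper bounds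
for the number of boundary points are compatible only if `p q + 1 + 2 r² ≤ (q + 2 p) r`, which
rearranges to `(p - r) (q - 2 r) ≤ -1`; so in particular `p ≠ r`.
-/

open MeasureTheory

/-- The triangle with vertices `(0, 0)`, `(1, 0)` and `(0, 1)`, of which every triangle is an affine
image. It is encoded by its edge inequalities, so that its slices can be read off. -/
def unitTriangle (𝕜 : Type*) [Semiring 𝕜] [LE 𝕜] : Set (𝕜 × 𝕜) :=
  {z | 0 ≤ z.1 ∧ 0 ≤ z.2 ∧ z.1 + z.2 ≤ 1}

section OrderedField

variable {𝕜 : Type*} [Field 𝕜] [LinearOrder 𝕜] [IsStrictOrderedRing 𝕜]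

lemma convex_unitTriangle : Convex 𝕜 (unitTriangle 𝕜) := by
  have hsum : IsLinearMap 𝕜 fun z : 𝕜 × 𝕜 ↦ z.1 + z.2 :=
    (LinearMap.fst 𝕜 𝕜 𝕜 + LinearMap.snd 𝕜 𝕜 𝕜).isLinear
  exact (convex_halfSpace_ge (LinearMap.fst 𝕜 𝕜 𝕜).isLinear 0).inter
    ((convex_halfSpace_ge (LinearMap.snd 𝕜 𝕜 𝕜).isLinear 0).inter (convex_halfSpace_le hsum 1))

lemma convexHull_eq_unitTriangle :
    convexHull 𝕜 {(0, 0), (1, 0), (0, 1)} = unitTriangle 𝕜 := by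
  apply Set.Subset.antisymm
  · exact convexHull_min (by rintro z (rfl | rfl | rfl) <;> simp [unitTriangle]) convex_unitTriangle
  · rintro ⟨x, y⟩ ⟨hx, hy, hxy⟩
    have hcomb := (convex_convexHull 𝕜 {((0 : 𝕜), (0 : 𝕜)), (1, 0), (0, 1)}).sum_mem
      (t := Finset.univ) (w := ![1 - (x + y), x, y]) (z := ![(0, 0), (1, 0), (0, 1)])
      (fun i _ ↦ by fin_cases i <;> simp_all)
      (by simp [Fin.sum_univ_three, add_assoc])
      (fun i _ ↦ subset_convexHull 𝕜 _ (by fin_cases i <;> simp))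
    simpa [Fin.sum_univ_three] using hcomb

lemma div_le_add_two_mul_iff {p q r : 𝕜} (hr : 0 < r) :
    (p * q + 1 + 2 * r ^ 2) / r ≤ q + 2 * p ↔ (p - r) * q ≤ 2 * r * (p - r) - 1 := by
  rw [div_le_iff₀ hr]
  constructor <;> intro h <;> linarith

end OrderedField

lemma measurableSet_unitTriangle : MeasurableSet (unitTriangle ℝ) := by
  unfold unitTriangle
  measurability

lemma volume_mk_preimage_unitTriangle (x : ℝ) :
    volume (Prod.mk x ⁻¹' unitTriangle ℝ) =
      (Set.Icc 0 1).indicator (fun x ↦ ENNReal.ofReal (1 - x)) x := by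
  by_cases hx : x ∈ Set.Icc 0 1
  · have hslice : Prod.mk x ⁻¹' unitTriangle ℝ = Set.Icc 0 (1 - x) := by
      ext y
      simp [unitTriangle, hx.1, le_sub_iff_add_le']
    rw [hslice, Real.volume_Icc, sub_zero, Set.indicator_of_mem hx]
  · have hslice : Prod.mk x ⁻¹' unitTriangle ℝ = ∅ :=
      Set.eq_empty_of_forall_notMem fun y ⟨hx₀, hy, hxy⟩ ↦ hx ⟨hx₀, by linarith⟩
    rw [hslice, measure_empty, Set.indicator_of_notMem hx]

lemma volume_unitTriangle : volume (unitTriangle ℝ) = ENNReal.ofReal (1 / 2) := by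
  have hint : ∫ x in Set.Icc (0 : ℝ) 1, (1 - x) = 1 / 2 := by
    rw [integral_Icc_eq_integral_Ioc, ← intervalIntegral.integral_of_le zero_le_one,
      intervalIntegral.integral_sub (by simp) (by simp), integral_id]
    norm_num
  rw [Measure.volume_eq_prod, Measure.prod_apply measurableSet_unitTriangle,
    lintegral_congr volume_mk_preimage_unitTriangle, lintegral_indicator measurableSet_Icc, ← hint,
    ofReal_integral_eq_lintegral_ofReal]
  · exact (by fun_prop : Continuous fun x : ℝ ↦ 1 - x).integrableOn_Icc
  · filter_upwards [ae_restrict_mem measurableSet_Icc] with x hx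
    exact sub_nonneg.2 hx.2

lemma volume_convexHull_zero_pair (u v : ℝ × ℝ) :
    volume (convexHull ℝ {0, u, v}) = ENNReal.ofReal (|u.1 * v.2 - v.1 * u.2| / 2) := by
  let f : ℝ × ℝ →ₗ[ℝ] ℝ × ℝ :=
    Matrix.toLin (.finTwoProd ℝ) (.finTwoProd ℝ) !![u.1, v.1; u.2, v.2]
  have himage : convexHull ℝ {0, u, v} = f '' unitTriangle ℝ := by
    rw [← convexHull_eq_unitTriangle, f.image_convexHull]
    simp [f, Set.image_insert_eq, Matrix.toLin_finTwoProd_apply, Prod.mk_zero_zero]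
  have hdet : LinearMap.det f = u.1 * v.2 - v.1 * u.2 := by
    rw [LinearMap.det_toLin, Matrix.det_fin_two_of]
  rw [himage, Measure.addHaar_image_linearMap, hdet, volume_unitTriangle,
    ← ENNReal.ofReal_mul (abs_nonneg _), mul_one_div]

open scoped Pointwise in
lemma area_convexHull_triple_s13 (a b c : ℝ × ℝ) :
    area (convexHull ℝ {a, b, c}) =
      |(b.1 - a.1) * (c.2 - a.2) - (c.1 - a.1) * (b.2 - a.2)| / 2 := by
  have htranslate : convexHull ℝ {a, b, c} = a +ᵥ convexHull ℝ {0, b - a, c - a} := by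
    rw [← convexHull_vadd]
    simp [Set.vadd_set_insert]
  rw [area, htranslate, measure_vadd, volume_convexHull_zero_pair,
    ENNReal.toReal_ofReal (by positivity)]
  simp

theorem key_inequality_general {c p q s : ℝ} (hc : -1 < c)
    (hlower : (2 * area (convexHull ℝ {(0, 0), (q, 0), (s, p)}) + 1 + 2 * (c + 1) ^ 2) / (c + 1) ≤
      bcount (convexHull ℝ {(0, 0), (q, 0), (s, p)}))
    (hupper : bcount (convexHull ℝ {(0, 0), (q, 0), (s, p)}) ≤ q + 2 * p) :
    area (convexHull ℝ {(0, 0), (q, 0), (s, p)}) = |p * q| / 2 ∧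
      (p - c - 1) * q ≤ 2 * (c + 1) * (p - c - 1) - 1 ∧ p ≠ c + 1 := by
  have harea : area (convexHull ℝ {(0, 0), (q, 0), (s, p)}) = |p * q| / 2 := by
    simp [area_convexHull_triple_s13, mul_comm]
  have hr : 0 < c + 1 := by linarith
  have hcompat : (p * q + 1 + 2 * (c + 1) ^ 2) / (c + 1) ≤ q + 2 * p := by
    have hpq : p * q ≤ 2 * area (convexHull ℝ {(0, 0), (q, 0), (s, p)}) := by
      linarith [le_abs_self (p * q)]
    exact le_trans (by gcongr) (hlower.trans hupper)
  have hineq : (p - c - 1) * q ≤ 2 * (c + 1) * (p - c - 1) - 1 := by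
    simpa only [sub_sub] using (div_le_add_two_mul_iff hr).1 hcompat
  refine ⟨harea, hineq, ?_⟩
  rintro rfl
  norm_num at hineq

/-- Let `c ≥ 2` and let `T` be the lattice triangle with vertices `(0,0)`, `(q,0)`, `(s,p)`
with `p, q > 0` (so `a(T) = pq/2`). If `(2a(T) + 1 + 2(c+1)²)/(c+1) ≤ b(T) ≤ q + 2p`,
then `(p − c − 1)·q ≤ 2(c+1)(p − c − 1) − 1`; in particular `p ≠ c + 1`. -/
theorem key_inequality (c p q s : ℤ) (hc : 2 ≤ c) (hp : 0 < p) (hq : 0 < q)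
    (h1 : (2 * area (convexHull ℝ {toR2 (0, 0), toR2 (q, 0), toR2 (s, p)}) + 1 +
            2 * ((c : ℝ) + 1) ^ 2) / ((c : ℝ) + 1) ≤
          (bcount (convexHull ℝ {toR2 (0, 0), toR2 (q, 0), toR2 (s, p)}) : ℝ))
    (h2 : (bcount (convexHull ℝ {toR2 (0, 0), toR2 (q, 0), toR2 (s, p)}) : ℝ) ≤
          (q : ℝ) + 2 * (p : ℝ)) :
    area (convexHull ℝ {toR2 (0, 0), toR2 (q, 0), toR2 (s, p)}) = (p : ℝ) * (q : ℝ) / 2 ∧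
    (p - c - 1) * q ≤ 2 * (c + 1) * (p - c - 1) - 1 ∧ p ≠ c + 1 := by
  have hc' : (-1 : ℝ) < c := by exact_mod_cast (by omega : -1 < c)
  have hpq : (0 : ℝ) ≤ p * q := by exact_mod_cast (mul_pos hp hq).le
  simp only [toR2, Int.cast_zero] at h1 h2 ⊢
  obtain ⟨harea, hineq, hne⟩ := key_inequality_general hc' h1 h2
  exact ⟨by rw [harea, abs_of_nonneg hpq], by exact_mod_cast hineq, by exact_mod_cast hne⟩
end
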